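/- There exists a universal constant d₀ > 0 such that for all integers d ≥ d₀ the following holds. Every connected n-vertex graph G with all degrees in [(1-10^{-10})d, (1+10^{-10})d] contains at least e^{n/2000} pairwise non-isomorphic spanning trees. -/

import Mathlib

/-!
Suppose that a tree `A` in `G` has few leaves and branch vertices and dominates `G`, and that there
is a large set `X` of vertices outside `A` such that every `x ∈ X` has two private neighbours
`a x, b x ∈ A`. Extend `A` to a spanning tree by hanging each `x ∈ X` below `a x` or `b x` and every
other vertex below a fixed neighbour in `A`. This gives `2 ^ #X` spanning trees, and the degrees at
the vertices `a x` tell them apart: an isomorphism between two of them that fixes `A` pointwise is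
between equal trees. Conversely, an isomorphism onto a given tree is determined on `A` by the image
of the root and by its values at leaves and siblings, since elsewhere the unique child of a vertex
has to follow the image of the path to the root. Hence an isomorphism class contains at most
`n * Δ ^ O(k)` of the trees, where `k` counts the leaves and branch vertices of `A`.

To find `A` and `X`, split `V` into `S` and `Sᶜ` such that almost all vertices have at least a third
of their neighbours on either side. Greedily cover a positive fraction of `S` by disjoint paths of
length about `√d`, choose `X` in `Sᶜ` by greedily picking vertices with two unused neighbours on the
paths, and add more paths and single vertices, `O(n / √d)` in total, until the family is dominating.
In a connected graph a dominating family of paths is joined to a tree by adding at most two vertices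
per path. So `k = O(n / √d)` while `#X` is linear in `n`, and `n * Δ ^ O(k)` is negligible against
`2 ^ #X` for large `d`.
-/

open Finset

section DegIn

variable {V : Type*} (G : SimpleGraph V) [DecidableRel G.Adj]

/-- The number of neighbours of `v` inside `S`. Sums of `degIn G S` over a set count the edges
between that set and `S`. -/
def degIn (S : Finset V) (v : V) : ℕ := #{w ∈ S | G.Adj v w}

lemma degIn_mono {S T : Finset V} (h : S ⊆ T) (v : V) : degIn G S v ≤ degIn G T v :=
  card_le_card (filter_subset_filter _ h)

lemma sum_degIn_comm (A B : Finset V) : ∑ x ∈ A, degIn G B x = ∑ y ∈ B, degIn G A y := by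
  simpa only [bipartiteAbove, bipartiteBelow, G.adj_comm, degIn] using
    sum_card_bipartiteAbove_eq_sum_card_bipartiteBelow (s := A) (t := B) G.Adj

lemma degIn_le_degree [Fintype V] (S : Finset V) (v : V) : degIn G S v ≤ G.degree v := by
  rw [← G.card_neighborFinset_eq_degree]
  exact card_le_card fun w hw ↦ by simpa using (mem_filter.mp hw).2

variable [DecidableEq V]

lemma degIn_sdiff_add_degIn {P S : Finset V} (h : P ⊆ S) (v : V) :
    degIn G (S \ P) v + degIn G P v = degIn G S v := by
  rw [degIn, degIn, degIn, ← card_union_of_disjoint (disjoint_filter_filter sdiff_disjoint),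
    ← filter_union, sdiff_union_of_subset h]

lemma degIn_add_degIn_compl [Fintype V] (S : Finset V) (v : V) :
    degIn G S v + degIn G Sᶜ v = G.degree v := by
  have huniv : degIn G univ v = G.degree v := by
    simp [degIn, ← G.card_neighborFinset_eq_degree, G.neighborFinset_eq_filter]
  rw [← huniv, ← degIn_sdiff_add_degIn G (subset_univ S), compl_eq_univ_sdiff, add_comm]

end DegIn

section SideSign

variable {V : Type*} [DecidableEq V]

/-- The `±1` indicator of `S`, for second moments over a uniformly random `S`. -/
def sideSign (S : Finset V) (i : V) : ℤ := if i ∈ S then 1 else -1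

lemma sideSign_mul_self (S : Finset V) (i : V) : sideSign S i * sideSign S i = 1 := by
  unfold sideSign; split_ifs <;> norm_num

lemma sideSign_symmDiff_self (S : Finset V) (i : V) :
    sideSign (symmDiff S {i}) i = -sideSign S i := by
  by_cases hi : i ∈ S <;> simp [sideSign, mem_symmDiff, hi]

lemma sideSign_symmDiff_of_ne (S : Finset V) {i j : V} (hij : i ≠ j) :
    sideSign (symmDiff S {i}) j = sideSign S j := by
  simp [sideSign, mem_symmDiff, hij.symm]

variable [Fintype V]

lemma sum_sideSign_mul_sideSign_of_ne {i j : V} (hij : i ≠ j) :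
    ∑ S : Finset V, sideSign S i * sideSign S j = 0 := by
  refine sum_involution (fun S _ ↦ symmDiff S {i}) (fun S _ ↦ ?_) (fun S _ _ hfix ↦ ?_)
    (fun S _ ↦ mem_univ _) (fun S _ ↦ by simp)
  · rw [sideSign_symmDiff_self, sideSign_symmDiff_of_ne S hij]; ring
  · simp at hfix

lemma sum_sq_sum_sideSign (N : Finset V) :
    ∑ S : Finset V, (∑ i ∈ N, sideSign S i) ^ 2 = Fintype.card (Finset V) * #N := by
  have hrow (i : V) (hi : i ∈ N) :
      ∑ j ∈ N, ∑ S : Finset V, sideSign S i * sideSign S j = Fintype.card (Finset V) := by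
    rw [sum_eq_single_of_mem i hi fun j _ hji ↦ sum_sideSign_mul_sideSign_of_ne hji.symm]
    simp [sideSign_mul_self, card_univ]
  calc ∑ S : Finset V, (∑ i ∈ N, sideSign S i) ^ 2
      = ∑ i ∈ N, ∑ j ∈ N, ∑ S : Finset V, sideSign S i * sideSign S j := by
        simp only [sq, sum_mul_sum]
        rw [sum_comm]
        exact sum_congr rfl fun i _ ↦ sum_comm
    _ = Fintype.card (Finset V) * #N := by
        rw [sum_congr rfl hrow, sum_const, nsmul_eq_mul, mul_comm]

end SideSign

section BalancedSet

variable {V : Type*} [Fintype V] (G : SimpleGraph V) [DecidableRel G.Adj]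

lemma two_mul_degIn_sub_degree [DecidableEq V] (S : Finset V) (v : V) :
    2 * (degIn G S v : ℤ) - G.degree v = ∑ i ∈ G.neighborFinset v, sideSign S i := by
  have hsign (i : V) : sideSign S i = 2 * (if i ∈ S then 1 else 0) - 1 := by
    unfold sideSign; split_ifs <;> norm_num
  have hfilter : ({w ∈ S | G.Adj v w} : Finset V) = {w ∈ G.neighborFinset v | w ∈ S} := by
    ext w; simp [and_comm]
  simp only [hsign, sum_sub_distrib, ← mul_sum, sum_boole, degIn, hfilter]
  simp

lemma exists_sum_sq_two_mul_degIn_sub_degree_le :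
    ∃ S : Finset V, ∑ v, (2 * (degIn G S v : ℤ) - G.degree v) ^ 2 ≤ ∑ v, (G.degree v : ℤ) := by
  classical
  have htotal : ∑ S : Finset V, ∑ v, (2 * (degIn G S v : ℤ) - G.degree v) ^ 2 ≤
      ∑ _S : Finset V, ∑ v, (G.degree v : ℤ) := by
    rw [sum_comm]
    simp only [two_mul_degIn_sub_degree, sum_sq_sum_sideSign, G.card_neighborFinset_eq_degree,
      ← mul_sum, sum_const, card_univ, nsmul_eq_mul, le_refl]
  obtain ⟨S, -, hS⟩ := exists_le_of_sum_le ⟨∅, mem_univ _⟩ htotal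
  exact ⟨S, hS⟩

lemma exists_set_third_le_degIn [DecidableEq V] {δ : ℝ} (hδ : 0 ≤ δ) (hdeg : ∀ v, δ ≤ G.degree v) :
    ∃ S bad : Finset V, #bad * δ ^ 2 ≤ 9 * ∑ v, (G.degree v : ℝ) ∧
      ∀ v ∉ bad, δ / 3 ≤ degIn G S v ∧ δ / 3 ≤ degIn G Sᶜ v := by
  obtain ⟨S, hS⟩ := exists_sum_sq_two_mul_degIn_sub_degree_le G
  let dev : V → ℝ := fun v ↦ 2 * (degIn G S v : ℝ) - G.degree v
  have hdev : ∑ v, dev v ^ 2 ≤ ∑ v, (G.degree v : ℝ) := by simp only [dev]; exact_mod_cast hS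
  let bad : Finset V := {v | δ / 3 ≤ |dev v|}
  refine ⟨S, bad, ?_, fun v hv ↦ ?_⟩
  · have hbad : #bad • (δ / 3) ^ 2 ≤ ∑ v ∈ bad, dev v ^ 2 := by
      refine card_nsmul_le_sum _ _ _ fun v hv ↦ ?_
      rw [← sq_abs (dev v)]
      exact pow_le_pow_left₀ (by positivity) (mem_filter.mp hv).2 2
    have hmono : ∑ v ∈ bad, dev v ^ 2 ≤ ∑ v, dev v ^ 2 :=
      sum_le_univ_sum_of_nonneg fun v ↦ sq_nonneg (dev v)
    rw [nsmul_eq_mul] at hbad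
    linarith
  · have hsmall : |dev v| < δ / 3 := by simpa [bad] using hv
    have hsum : (degIn G S v : ℝ) + degIn G Sᶜ v = G.degree v := by
      exact_mod_cast degIn_add_degIn_compl G S v
    have hlow : -(δ / 3) < 2 * (degIn G S v : ℝ) - G.degree v := (abs_lt.mp hsmall).1
    have hupp : 2 * (degIn G S v : ℝ) - G.degree v < δ / 3 := (abs_lt.mp hsmall).2
    constructor <;> linarith [hdeg v]

end BalancedSet

section PathFamily

variable {V : Type*} {G : SimpleGraph V}

lemma sum_degIn_self_le_of_forall_subset [DecidableRel G.Adj] {l : ℕ} {W : Finset V}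
    (hW : ∀ W' ⊆ W, W'.Nonempty → ∃ w ∈ W', degIn G W' w < l) :
    ∑ w ∈ W, degIn G W w ≤ 2 * l * #W := by
  classical
  induction hn : #W generalizing W with
  | zero => simp [card_eq_zero.mp hn]
  | succ n ih =>
    obtain ⟨w, hw, hlt⟩ := hW W subset_rfl (card_pos.mp (by omega))
    have herase : ∑ x ∈ W.erase w, degIn G (W.erase w) x ≤ 2 * l * n :=
      ih (fun W' h ↦ hW W' (h.trans (erase_subset _ _))) (by rw [card_erase_of_mem hw]; omega)
    have hsplit : ∑ x ∈ W.erase w, degIn G W x =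
        ∑ x ∈ W.erase w, degIn G (W.erase w) x + degIn G (W.erase w) w := by
      have hcomm := sum_degIn_comm G (W.erase w) {w}
      rw [sum_singleton] at hcomm
      rw [← hcomm, ← sum_add_distrib, ← sdiff_singleton_eq_erase]
      exact sum_congr rfl fun x _ ↦ (degIn_sdiff_add_degIn G (singleton_subset_iff.mpr hw) x).symm
    have hmono := degIn_mono G (erase_subset w W) w
    rw [← add_sum_erase _ _ hw, hsplit]
    linarith

/-- A family of pairwise vertex-disjoint nonempty paths of `G`, each given by its list of
vertices; disjointness and simplicity are both encoded by `Q.flatten.Nodup`. -/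
structure IsPathFamily (G : SimpleGraph V) (Q : List (List V)) : Prop where
  nodup_flatten : Q.flatten.Nodup
  ne_nil : ∀ q ∈ Q, q ≠ []
  isChain : ∀ q ∈ Q, q.IsChain G.Adj

lemma IsPathFamily.nil : IsPathFamily G [] := ⟨by simp, by simp, by simp⟩

lemma IsPathFamily.singleton {q : List V} (hne : q ≠ []) (hnodup : q.Nodup)
    (hchain : q.IsChain G.Adj) : IsPathFamily G [q] :=
  ⟨by simpa, by simpa, by simpa⟩

lemma IsPathFamily.perm {Q Q' : List (List V)} (hQ : IsPathFamily G Q) (h : Q.Perm Q') :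
    IsPathFamily G Q' :=
  ⟨h.flatten.nodup_iff.mp hQ.nodup_flatten, fun q hq ↦ hQ.ne_nil q (h.mem_iff.mpr hq),
    fun q hq ↦ hQ.isChain q (h.mem_iff.mpr hq)⟩

lemma IsPathFamily.of_cons {q : List V} {Q : List (List V)} (h : IsPathFamily G (q :: Q)) :
    IsPathFamily G Q :=
  ⟨(List.nodup_append.mp h.nodup_flatten).2.1, fun _ hp ↦ h.ne_nil _ (.tail _ hp),
    fun _ hp ↦ h.isChain _ (.tail _ hp)⟩

lemma IsPathFamily.map_singleton {l : List V} (hl : l.Nodup) :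
    IsPathFamily G (l.map fun x ↦ [x]) := by
  refine ⟨by simpa [← List.flatMap_def] using hl, ?_, ?_⟩ <;>
  · intro q hq
    obtain ⟨x, -, rfl⟩ := List.mem_map.mp hq
    simp

variable [DecidableEq V]

/-- The set of vertices covered by a family of paths. -/
def pathSupport (Q : List (List V)) : Finset V := Q.flatten.toFinset

lemma pathSupport_append (Q Q' : List (List V)) :
    pathSupport (Q ++ Q') = pathSupport Q ∪ pathSupport Q' := by
  simp [pathSupport]

lemma pathSupport_cons (q : List V) (Q : List (List V)) :
    pathSupport (q :: Q) = q.toFinset ∪ pathSupport Q := by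
  simp [pathSupport]

lemma pathSupport_perm {Q Q' : List (List V)} (h : Q.Perm Q') :
    pathSupport Q = pathSupport Q' :=
  List.toFinset_eq_of_perm _ _ h.flatten

lemma pathSupport_map_singleton (l : List V) :
    pathSupport (l.map fun x ↦ [x]) = l.toFinset := by
  simp [pathSupport, ← List.flatMap_def]

lemma IsPathFamily.append {Q Q' : List (List V)} (hQ : IsPathFamily G Q) (hQ' : IsPathFamily G Q')
    (h : Disjoint (pathSupport Q) (pathSupport Q')) : IsPathFamily G (Q ++ Q') := by
  refine ⟨?_, fun q hq ↦ ?_, fun q hq ↦ ?_⟩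
  · rw [List.flatten_append]
    exact hQ.nodup_flatten.append hQ'.nodup_flatten (List.disjoint_toFinset_iff_disjoint.mp h)
  · exact (List.mem_append.mp hq).elim (hQ.ne_nil q) (hQ'.ne_nil q)
  · exact (List.mem_append.mp hq).elim (hQ.isChain q) (hQ'.isChain q)

lemma IsPathFamily.exists_pathSupport_eq_union {Q : List (List V)} {E : Finset V}
    (hQ : IsPathFamily G Q) (hE : Disjoint (pathSupport Q) E) :
    ∃ Q', IsPathFamily G Q' ∧ pathSupport Q' = pathSupport Q ∪ E ∧ Q'.length = Q.length + #E := by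
  have hsupp : pathSupport (E.toList.map fun x ↦ [x]) = E := by
    rw [pathSupport_map_singleton, toList_toFinset]
  exact ⟨Q ++ E.toList.map fun x ↦ [x],
    hQ.append (.map_singleton E.nodup_toList) (by rwa [hsupp]),
    by rw [pathSupport_append, hsupp], by simp⟩

lemma IsPathFamily.pathSupport_nonempty {Q : List (List V)} (hQ : IsPathFamily G Q) (hne : Q ≠ []) :
    (pathSupport Q).Nonempty := by
  obtain ⟨q, hq⟩ := List.exists_mem_of_ne_nil Q hne
  obtain ⟨x, hx⟩ := List.exists_mem_of_ne_nil q (hQ.ne_nil q hq)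
  exact ⟨x, List.mem_toFinset.mpr (List.mem_flatten.mpr ⟨q, hq, hx⟩)⟩

lemma IsPathFamily.disjoint_of_cons {q : List V} {Q : List (List V)}
    (h : IsPathFamily G (q :: Q)) : Disjoint q.toFinset (pathSupport Q) :=
  List.disjoint_toFinset_iff_disjoint.mpr (List.disjoint_of_nodup_append h.nodup_flatten)

lemma IsPathFamily.card_pathSupport {Q : List (List V)} (hQ : IsPathFamily G Q) {l : ℕ}
    (hl : ∀ q ∈ Q, q.length = l) : #(pathSupport Q) = Q.length * l := by
  rw [pathSupport, List.toFinset_card_of_nodup hQ.nodup_flatten, List.length_flatten,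
    List.map_congr_left (g := fun _ ↦ l) hl, List.map_const', List.sum_replicate, smul_eq_mul]

variable [DecidableRel G.Adj]

lemma exists_chain_of_le_degIn {l : ℕ} {W : Finset V} (hne : W.Nonempty)
    (hW : ∀ w ∈ W, l ≤ degIn G W w) {j : ℕ} (hj : j < l) :
    ∃ L : List V, L.length = j + 1 ∧ L.Nodup ∧ L.IsChain G.Adj ∧ L.toFinset ⊆ W := by
  induction j with
  | zero =>
    obtain ⟨w, hw⟩ := hne
    exact ⟨[w], by simp, by simp, by simp, by simpa using hw⟩
  | succ j ih =>
    obtain ⟨L, hlen, hnodup, hchain, hLW⟩ := ih (by omega)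
    obtain ⟨a, L, rfl⟩ := List.exists_cons_of_length_eq_add_one hlen
    have hcard : #(a :: L).toFinset < #{w ∈ W | G.Adj a w} :=
      calc #(a :: L).toFinset ≤ j + 1 := (List.toFinset_card_le _).trans hlen.le
        _ < l := hj
        _ ≤ degIn G W a := hW a (hLW (by simp))
    obtain ⟨y, hy, hyL⟩ := exists_mem_notMem_of_card_lt_card hcard
    obtain ⟨hyW, hay⟩ := mem_filter.mp hy
    refine ⟨y :: a :: L, by simpa using hlen, ?_, ?_, ?_⟩
    · exact List.nodup_cons.mpr ⟨by simpa using hyL, hnodup⟩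
    · exact List.isChain_cons_cons.mpr ⟨hay.symm, hchain⟩
    · rw [List.toFinset_cons]
      exact insert_subset hyW hLW

lemma exists_pathFamily_sum_degIn_sdiff_le (G : SimpleGraph V) [DecidableRel G.Adj] {l : ℕ}
    (hl : 0 < l) (U : Finset V) :
    ∃ Q : List (List V), IsPathFamily G Q ∧ (∀ q ∈ Q, q.length = l) ∧ pathSupport Q ⊆ U ∧
      ∑ w ∈ U \ pathSupport Q, degIn G (U \ pathSupport Q) w ≤ 2 * l * #U := by
  induction U using Finset.strongInduction with
  | H U ih =>
  by_cases hU : ∀ W ⊆ U, W.Nonempty → ∃ w ∈ W, degIn G W w < l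
  · exact ⟨[], .nil, by simp, by simp [pathSupport],
      by simpa [pathSupport] using sum_degIn_self_le_of_forall_subset hU⟩
  push Not at hU
  obtain ⟨W, hWU, hWne, hW⟩ := hU
  obtain ⟨L, hlen, hnodup, hchain, hLW⟩ :=
    exists_chain_of_le_degIn hWne hW (Nat.sub_lt hl one_pos)
  replace hlen : L.length = l := by omega
  have hLne : L ≠ [] := List.ne_nil_of_length_pos (by omega)
  have hssub : U \ L.toFinset ⊂ U :=
    sdiff_ssubset (hLW.trans hWU) (List.toFinset_nonempty_iff L |>.mpr hLne)
  obtain ⟨Q, hQ, hQlen, hQU, hQsum⟩ := ih _ hssub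
  have hdisj : Disjoint (pathSupport [L]) (pathSupport Q) := by
    simpa [pathSupport] using disjoint_sdiff.mono_right hQU
  refine ⟨[L] ++ Q, (IsPathFamily.singleton hLne hnodup hchain).append hQ hdisj, ?_, ?_, ?_⟩
  · simpa [hlen] using hQlen
  · rw [pathSupport_append]
    exact union_subset (by simpa [pathSupport] using hLW.trans hWU) (hQU.trans sdiff_subset)
  · have hsdiff : U \ pathSupport ([L] ++ Q) = (U \ L.toFinset) \ pathSupport Q := by
      simp [pathSupport, sdiff_sdiff_left]
    rw [hsdiff]
    exact hQsum.trans (Nat.mul_le_mul_left _ (card_le_card sdiff_subset))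

end PathFamily

section CherryFamily

variable {V : Type*} {G : SimpleGraph V} {P P' X X' : Finset V} {a b : V → V}

/-- Every `x ∈ X` has two neighbours `a x, b x ∈ P`, and all these neighbours are distinct: the
stars `a x - x - b x` are vertex-disjoint as soon as `X` and `P` are. Each `x` will be hung as a
leaf below `a x` or below `b x`. -/
structure IsCherryFamily (G : SimpleGraph V) (P X : Finset V) (a b : V → V) : Prop where
  adj_left : ∀ x ∈ X, G.Adj x (a x)
  adj_right : ∀ x ∈ X, G.Adj x (b x)
  left_mem : ∀ x ∈ X, a x ∈ P
  right_mem : ∀ x ∈ X, b x ∈ P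
  left_injOn : Set.InjOn a X
  right_injOn : Set.InjOn b X
  left_ne_right : ∀ x ∈ X, ∀ y ∈ X, a x ≠ b y

lemma IsCherryFamily.empty : IsCherryFamily G P ∅ a b := by
  constructor <;> simp

lemma IsCherryFamily.mono (h : IsCherryFamily G P X a b) (hP : P ⊆ P') (hX : X' ⊆ X) :
    IsCherryFamily G P' X' a b where
  adj_left x hx := h.adj_left x (hX hx)
  adj_right x hx := h.adj_right x (hX hx)
  left_mem x hx := hP (h.left_mem x (hX hx))
  right_mem x hx := hP (h.right_mem x (hX hx))
  left_injOn := h.left_injOn.mono (mod_cast hX)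
  right_injOn := h.right_injOn.mono (mod_cast hX)
  left_ne_right x hx y hy := h.left_ne_right x (hX hx) y (hX hy)

lemma IsCherryFamily.insert_of_adj [DecidableEq V] {x u w : V}
    (h : IsCherryFamily G (P \ {u, w}) X a b) (hx : x ∉ X) (hu : u ∈ P) (hw : w ∈ P)
    (huw : u ≠ w) (hxu : G.Adj x u) (hxw : G.Adj x w) :
    IsCherryFamily G P (insert x X) (Function.update a x u) (Function.update b x w) := by
  have hne : ∀ y ∈ X, y ≠ x := fun y hy e ↦ hx (e ▸ hy)
  have ha : ∀ y ∈ X, a y ∈ P ∧ a y ≠ u ∧ a y ≠ w := fun y hy ↦ by simpa using h.left_mem y hy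
  have hb : ∀ y ∈ X, b y ∈ P ∧ b y ≠ u ∧ b y ≠ w := fun y hy ↦ by simpa using h.right_mem y hy
  have hupdate {f : V → V} {t : V} : Set.EqOn (Function.update f x t) f X :=
    fun y hy ↦ Function.update_of_ne (hne y hy) t f
  have hinj {f : V → V} {t : V} (hf : Set.InjOn f X) (ht : ∀ y ∈ X, f y ≠ t) :
      Set.InjOn (Function.update f x t) (insert x X : Finset V) := by
    rw [coe_insert, Set.injOn_insert (mod_cast hx), hupdate.injOn_iff, Function.update_self,
      hupdate.image_eq]
    exact ⟨hf, by rintro ⟨y, hy, rfl⟩; exact ht y hy rfl⟩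
  refine ⟨?_, ?_, ?_, ?_, hinj h.left_injOn fun y hy ↦ (ha y hy).2.1,
    hinj h.right_injOn fun y hy ↦ (hb y hy).2.2, ?_⟩
  · simpa [forall_mem_insert, hxu] using fun y hy ↦ by
      rw [hupdate hy]; exact h.adj_left y hy
  · simpa [forall_mem_insert, hxw] using fun y hy ↦ by
      rw [hupdate hy]; exact h.adj_right y hy
  · simpa [forall_mem_insert, hu] using fun y hy ↦ by
      rw [hupdate hy]; exact (ha y hy).1
  · simpa [forall_mem_insert, hw] using fun y hy ↦ by
      rw [hupdate hy]; exact (hb y hy).1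
  · intro y hy z hz
    obtain rfl | hyX := mem_insert.mp hy <;> obtain rfl | hzX := mem_insert.mp hz
    · simpa using huw
    · rw [Function.update_self, hupdate hzX]; exact (hb z hzX).2.1.symm
    · rw [Function.update_self, hupdate hyX]; exact (ha y hyX).2.2
    · rw [hupdate hyX, hupdate hzX]; exact h.left_ne_right y hyX z hzX

lemma exists_cherryFamily_sum_degIn_le [Fintype V] (G : SimpleGraph V) [DecidableRel G.Adj]
    (X P : Finset V) :
    ∃ (X₀ : Finset V) (a b : V → V), X₀ ⊆ X ∧ IsCherryFamily G P X₀ a b ∧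
      ∑ x ∈ X, degIn G P x ≤ 3 * G.maxDegree * #X₀ + #X := by
  classical
  induction X using Finset.strongInduction generalizing P with
  | H X ih =>
  by_cases hX : ∃ x ∈ X, 1 < degIn G P x
  · obtain ⟨x, hxX, hx⟩ := hX
    obtain ⟨u, hu, w, hw, huw⟩ := one_lt_card.mp hx
    obtain ⟨⟨hu, hxu⟩, ⟨hw, hxw⟩⟩ := And.intro (mem_filter.mp hu) (mem_filter.mp hw)
    obtain ⟨X₀, a, b, hsub, hfam, hsum⟩ := ih (X.erase x) (erase_ssubset hxX) (P \ {u, w})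
    have hxX₀ : x ∉ X₀ := fun h ↦ notMem_erase x X (hsub h)
    refine ⟨insert x X₀, _, _, insert_subset hxX (hsub.trans (erase_subset _ _)),
      hfam.insert_of_adj hxX₀ hu hw huw hxu hxw, ?_⟩
    have hsplit : ∑ y ∈ X.erase x, degIn G P y =
        ∑ y ∈ X.erase x, degIn G (P \ {u, w}) y +
          (degIn G (X.erase x) u + degIn G (X.erase x) w) := by
      rw [← sum_pair huw, sum_degIn_comm G {u, w}, ← sum_add_distrib]
      exact sum_congr rfl fun y _ ↦
        (degIn_sdiff_add_degIn G (insert_subset hu (singleton_subset_iff.mpr hw)) y).symm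
    have hle (S : Finset V) (v : V) : degIn G S v ≤ G.maxDegree :=
      (degIn_le_degree G S v).trans (G.degree_le_maxDegree v)
    rw [← add_sum_erase _ _ hxX, hsplit, card_insert_of_notMem hxX₀]
    have hcard := card_erase_lt_of_mem hxX
    linarith [hle P x, hle (X.erase x) u, hle (X.erase x) w]
  · push Not at hX
    exact ⟨∅, id, id, empty_subset X, .empty, by simpa using sum_le_card_nsmul X _ 1 hX⟩

end CherryFamily

section RootedTree

variable {V : Type*} {G : SimpleGraph V} {r u v : V} {A L L' B B' : Finset V} {p : V → V}
  {h : V → ℕ} {z z' : ℕ}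

/-- The children of `v` in the tree on `A` with root `r` and parent map `p`; the value `p r` is
irrelevant. -/
def children (r : V) (A : Finset V) (p : V → V) (v : V) : Set V := {c | c ∈ A ∧ c ≠ r ∧ p c = v}

/-- `p` is the parent map of a tree in `G` with vertex set `A` and root `r`, where `h` strictly
decreases towards the root. The set `L` contains the leaves; `B` contains the root, its children
and all vertices with a sibling, so every vertex outside `L ∪ B` is an inner vertex and the only
child of a non-root vertex. -/
structure IsRootedTree (G : SimpleGraph V) (r : V) (A : Finset V) (p : V → V) (h : V → ℕ)
    (L B : Finset V) : Prop where
  root_mem : r ∈ A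
  parent_mem : ∀ u ∈ A, u ≠ r → p u ∈ A
  adj_parent : ∀ u ∈ A, u ≠ r → G.Adj u (p u)
  height_lt : ∀ u ∈ A, u ≠ r → h (p u) < h u
  children_nonempty : ∀ u ∈ A, u ∉ L → (children r A p u).Nonempty
  ne_root : ∀ u ∈ A, u ∉ B → u ≠ r
  parent_ne_root : ∀ u ∈ A, u ∉ B → p u ≠ r
  siblings_subsingleton : ∀ u ∈ A, u ∉ B → (children r A p (p u)).Subsingleton

/-- `G` contains a tree on `A` with root `r` all of whose vertices, except for at most `z` (with
multiplicity), are inner vertices and only children of non-root vertices. -/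
def HasRootedTree (G : SimpleGraph V) (r : V) (A : Finset V) (z : ℕ) : Prop :=
  ∃ p h L B, IsRootedTree G r A p h L B ∧ #L + #B ≤ z

/-- As `HasRootedTree`, where in addition `v` is a non-root leaf of the tree. -/
def HasRootedTreeWithLeaf (G : SimpleGraph V) (r : V) (A : Finset V) (z : ℕ) (v : V) : Prop :=
  ∃ p h L B, IsRootedTree G r A p h L B ∧ #L + #B ≤ z ∧ v ∈ A ∧ v ∈ L ∧ v ≠ r ∧
    children r A p v = ∅

lemma HasRootedTreeWithLeaf.hasRootedTree (hA : HasRootedTreeWithLeaf G r A z v) :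
    HasRootedTree G r A z := by
  obtain ⟨p, h, L, B, hT, hz, -⟩ := hA
  exact ⟨p, h, L, B, hT, hz⟩

lemma HasRootedTree.mono (hA : HasRootedTree G r A z) (hz : z ≤ z') : HasRootedTree G r A z' := by
  obtain ⟨p, h, L, B, hT, hLB⟩ := hA
  exact ⟨p, h, L, B, hT, hLB.trans hz⟩

lemma HasRootedTree.root_mem (hA : HasRootedTree G r A z) : r ∈ A := by
  obtain ⟨p, h, L, B, hT, -⟩ := hA
  exact hT.root_mem

lemma HasRootedTree.singleton (G : SimpleGraph V) (r : V) : HasRootedTree G r {r} 2 := by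
  refine ⟨id, 0, {r}, {r}, ?_, by simp⟩
  constructor <;> simp +contextual

lemma IsRootedTree.exists_children_subset (hT : IsRootedTree G r A p h L B) (v : V) :
    ∃ B', B ⊆ B' ∧ children r A p v ⊆ B' ∧ #B' ≤ #B + 1 := by
  classical
  by_cases hv : children r A p v ⊆ B
  · exact ⟨B, subset_rfl, hv, Nat.le_succ _⟩
  · obtain ⟨c, hc, hcB⟩ := Set.not_subset.mp hv
    refine ⟨insert c B, subset_insert _ _, fun x hx ↦ ?_, card_insert_le _ _⟩
    have hsub := hT.siblings_subsingleton c hc.1 hcB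
    rw [hc.2.2] at hsub
    simp [hsub hx hc]

variable [DecidableEq V]

lemma children_insert_of_ne (hu : u ∉ A) {x : V} (hx : x ≠ v) :
    children r (insert u A) (Function.update p u v) x = children r A p x := by
  ext c
  by_cases hc : c = u
  · subst hc
    simp [children, hu, hx.symm]
  · simp [children, hc]

lemma children_insert_self (hur : u ≠ r) :
    children r (insert u A) (Function.update p u v) v = insert u (children r A p v) := by
  ext c
  by_cases hc : c = u
  · subst hc
    simp [children, hur]
  · simp [children, hc]

lemma IsRootedTree.children_insert_leaf (hT : IsRootedTree G r A p h L B) (hv : v ∈ A)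
    (hu : u ∉ A) : children r (insert u A) (Function.update p u v) u = ∅ := by
  rw [children_insert_of_ne hu (ne_of_mem_of_not_mem hv hu).symm]
  refine Set.eq_empty_of_forall_notMem fun c hc ↦ hu ?_
  exact hc.2.2 ▸ hT.parent_mem c hc.1 hc.2.1

lemma IsRootedTree.insert_leaf (hT : IsRootedTree G r A p h L B) (hv : v ∈ A) (hu : u ∉ A)
    (huv : G.Adj v u) (hL : L.erase v ⊆ L') (huL : u ∈ L') (hB : B ⊆ B')
    (huB : u ∈ B' ∨ v ≠ r ∧ children r A p v = ∅) (hchildren : children r A p v ⊆ B') :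
    IsRootedTree G r (insert u A) (Function.update p u v) (Function.update h u (h v + 1))
      L' B' := by
  have hne : ∀ x ∈ A, x ≠ u := fun x hx ↦ ne_of_mem_of_not_mem hx hu
  have hur : u ≠ r := (hne r hT.root_mem).symm
  have hp {x : V} (hx : x ∈ A) : Function.update p u v x = p x :=
    Function.update_of_ne (hne x hx) v p
  have hh {x : V} (hx : x ∈ A) : Function.update h u (h v + 1) x = h x :=
    Function.update_of_ne (hne x hx) _ h
  constructor
  · exact mem_insert_of_mem hT.root_mem
  · refine forall_mem_insert _ _ _ |>.mpr ⟨fun _ ↦ by simp [hv], fun x hx hxr ↦ ?_⟩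
    rw [hp hx]
    exact mem_insert_of_mem (hT.parent_mem x hx hxr)
  · refine forall_mem_insert _ _ _ |>.mpr ⟨fun _ ↦ by simpa using huv.symm, fun x hx hxr ↦ ?_⟩
    rw [hp hx]
    exact hT.adj_parent x hx hxr
  · refine forall_mem_insert _ _ _ |>.mpr ⟨fun _ ↦ by simp [hh hv], fun x hx hxr ↦ ?_⟩
    rw [hp hx, hh hx, hh (hT.parent_mem x hx hxr)]
    exact hT.height_lt x hx hxr
  · refine forall_mem_insert _ _ _ |>.mpr ⟨fun h ↦ absurd huL h, fun x hx hxL ↦ ?_⟩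
    obtain rfl | hxv := eq_or_ne x v
    · exact children_insert_self hur ▸ Set.insert_nonempty _ _
    · rw [children_insert_of_ne hu hxv]
      exact hT.children_nonempty x hx fun h ↦ hxL (hL (mem_erase.mpr ⟨hxv, h⟩))
  · exact forall_mem_insert _ _ _ |>.mpr ⟨fun _ ↦ hur, fun x hx hxB ↦
      hT.ne_root x hx (mt (@hB x) hxB)⟩
  · refine forall_mem_insert _ _ _ |>.mpr ⟨fun huB' ↦ ?_, fun x hx hxB ↦ ?_⟩
    · simpa using (huB.resolve_left huB').1
    · rw [hp hx]
      exact hT.parent_ne_root x hx (mt (@hB x) hxB)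
  · refine forall_mem_insert _ _ _ |>.mpr ⟨fun huB' ↦ ?_, fun x hx hxB ↦ ?_⟩
    · rw [Function.update_self, children_insert_self hur, (huB.resolve_left huB').2]
      simp
    · have hxB₀ : x ∉ B := mt (@hB x) hxB
      have hpx : p x ≠ v := fun hpx ↦ hxB (hchildren ⟨hx, hT.ne_root x hx hxB₀, hpx⟩)
      rw [hp hx, children_insert_of_ne hu hpx]
      exact hT.siblings_subsingleton x hx hxB₀

lemma HasRootedTreeWithLeaf.insert_leaf (hA : HasRootedTreeWithLeaf G r A z v) (hu : u ∉ A)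
    (huv : G.Adj v u) : HasRootedTreeWithLeaf G r (insert u A) z u := by
  obtain ⟨p, h, L, B, hT, hz, hvA, hvL, hvr, hv⟩ := hA
  have hcard : #(insert u (L.erase v)) ≤ #L :=
    (card_insert_le _ _).trans (card_erase_add_one hvL).le
  refine ⟨_, _, insert u (L.erase v), B, hT.insert_leaf hvA hu huv (subset_insert _ _)
    (mem_insert_self _ _) subset_rfl (.inr ⟨hvr, hv⟩) (by simp [hv]), by omega,
    mem_insert_self _ _, mem_insert_self _ _, ?_, hT.children_insert_leaf hvA hu⟩
  exact (ne_of_mem_of_not_mem hT.root_mem hu).symm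

lemma HasRootedTree.insert_leaf (hA : HasRootedTree G r A z) (hv : v ∈ A) (hu : u ∉ A)
    (huv : G.Adj v u) : HasRootedTreeWithLeaf G r (insert u A) (z + 3) u := by
  obtain ⟨p, h, L, B, hT, hz⟩ := hA
  obtain ⟨B', hBB', hB', hcardB'⟩ := hT.exists_children_subset v
  have hcardL := card_insert_le u L
  have hcardB := card_insert_le u B'
  refine ⟨_, _, insert u L, insert u B', hT.insert_leaf hv hu huv
    ((erase_subset _ _).trans (subset_insert _ _)) (mem_insert_self _ _)
    (hBB'.trans (subset_insert _ _)) (.inl (mem_insert_self _ _)) (hB'.trans (by simp)), by omega,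
    mem_insert_self _ _, mem_insert_self _ _, ?_, hT.children_insert_leaf hv hu⟩
  exact (ne_of_mem_of_not_mem hT.root_mem hu).symm

lemma HasRootedTreeWithLeaf.append_path {l : List V} (hA : HasRootedTreeWithLeaf G r A z v)
    (hchain : (v :: l).IsChain G.Adj) (hnodup : l.Nodup) (hdisj : Disjoint A l.toFinset) :
    HasRootedTree G r (A ∪ l.toFinset) z := by
  induction l generalizing A v with
  | nil => simpa using hA.hasRootedTree
  | cons u l ih =>
    obtain ⟨huv, hchain⟩ := List.isChain_cons_cons.mp hchain
    obtain ⟨hul, hnodup⟩ := List.nodup_cons.mp hnodup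
    obtain ⟨huA, hdisj⟩ : u ∉ A ∧ Disjoint A l.toFinset := by simpa using hdisj
    have hdisj' : Disjoint (insert u A) l.toFinset := by simpa [hul] using hdisj
    simpa using ih (hA.insert_leaf huA huv) hchain hnodup hdisj'

lemma HasRootedTree.append_path {l : List V} (hA : HasRootedTree G r A z) (hv : v ∈ A)
    (hchain : (v :: l).IsChain G.Adj) (hnodup : l.Nodup) (hdisj : Disjoint A l.toFinset) :
    HasRootedTree G r (A ∪ l.toFinset) (z + 3) := by
  cases l with
  | nil => simpa using hA.mono (Nat.le_add_right z 3)
  | cons u l =>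
    obtain ⟨huv, hchain⟩ := List.isChain_cons_cons.mp hchain
    obtain ⟨hul, hnodup⟩ := List.nodup_cons.mp hnodup
    obtain ⟨huA, hdisj⟩ : u ∉ A ∧ Disjoint A l.toFinset := by simpa using hdisj
    have hdisj' : Disjoint (insert u A) l.toFinset := by simpa [hul] using hdisj
    simpa using (hA.insert_leaf hv huA huv).append_path hchain hnodup hdisj'

end RootedTree

section Connecting

variable {V : Type*} {G : SimpleGraph V} {r : V} {A R : Finset V} {z : ℕ}

/-- `D` is a dominating set of `G`: every vertex lies in `D` or has a neighbour in `D`. -/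
def IsDominating (G : SimpleGraph V) (D : Finset V) : Prop :=
  ∀ v ∉ D, ∃ w ∈ D, G.Adj v w

lemma IsDominating.mono {D D' : Finset V} (hD : IsDominating G D) (h : D ⊆ D') :
    IsDominating G D' := fun v hv ↦
  let ⟨w, hw, hvw⟩ := hD v fun hvD ↦ hv (h hvD)
  ⟨w, h hw, hvw⟩

variable [DecidableEq V]

/- Follow a walk from `A` to `R` until it leaves the closed neighbourhood of `A`, along `xy` say.
If `y ∉ R`, then `y` is dominated by `R`. -/
lemma exists_short_connection (hG : G.Preconnected) (hA : A.Nonempty) (hR : R.Nonempty)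
    (hdom : IsDominating G (A ∪ R)) (hdisj : Disjoint A R) :
    ∃ a ∈ A, ∃ y ∈ R, ∃ c : List V, (a :: (c ++ [y])).IsChain G.Adj ∧ c.Nodup ∧ c.length ≤ 2 ∧
      Disjoint c.toFinset (A ∪ R) := by
  by_cases hAR : ∃ a ∈ A, ∃ y ∈ R, G.Adj a y
  · obtain ⟨a, ha, y, hy, h⟩ := hAR
    exact ⟨a, ha, y, hy, [], by simpa using h, by simp, by simp, by simp⟩
  push Not at hAR
  obtain ⟨⟨a₀, ha₀⟩, ⟨y₀, hy₀⟩⟩ := And.intro hA hR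
  obtain ⟨w⟩ := hG a₀ y₀
  have hy₀N : y₀ ∉ {x | x ∈ A ∨ ∃ a ∈ A, G.Adj a x} := by
    rintro (h | ⟨a, ha, h⟩)
    · exact disjoint_right.mp hdisj hy₀ h
    · exact hAR a ha y₀ hy₀ h
  obtain ⟨⟨⟨x, y⟩, hxy⟩, -, hx, hy⟩ := w.exists_boundary_dart _ (Or.inl ha₀) hy₀N
  obtain ⟨hyA, hAy⟩ : y ∉ A ∧ ∀ a ∈ A, ¬G.Adj a y := by simpa using hy
  have hxA : x ∉ A := fun h ↦ hAy x h hxy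
  obtain ⟨a, ha, hax⟩ := hx.resolve_left hxA
  have hxR : x ∉ R := fun h ↦ hAR a ha x h hax
  by_cases hyR : y ∈ R
  · exact ⟨a, ha, y, hyR, [x], by simpa using ⟨hax, hxy⟩, by simp, by simp, by simp [hxA, hxR]⟩
  · obtain ⟨t, ht, hyt⟩ := hdom y (by simp [hyA, hyR])
    have htR : t ∈ R := (mem_union.mp ht).resolve_left fun htA ↦ hAy t htA hyt.symm
    exact ⟨a, ha, t, htR, [x, y], by simpa using ⟨hax, hxy, hyt⟩, by simpa using hxy.ne, by simp,
      by simp [hxA, hxR, hyA, hyR]⟩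

lemma HasRootedTree.append_connected_path {a y : V} {c l₁ l₂ : List V}
    (hA : HasRootedTree G r A z) (ha : a ∈ A) (hc : (a :: (c ++ [y])).IsChain G.Adj)
    (hq : (l₁ ++ y :: l₂).IsChain G.Adj) (hnodup : (c ++ (l₁ ++ y :: l₂)).Nodup)
    (hdisj : Disjoint A (c ++ (l₁ ++ y :: l₂)).toFinset) :
    HasRootedTree G r (A ∪ (c ++ (l₁ ++ y :: l₂)).toFinset) (z + 6) := by
  have hperm : (c ++ (l₁ ++ y :: l₂)).Perm ((c ++ y :: l₂) ++ l₁.reverse) := by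
    rw [List.append_assoc]
    exact (List.perm_append_comm.trans (l₁.reverse_perm.symm.append_left _)).append_left c
  rw [List.toFinset_eq_of_perm _ _ hperm, List.toFinset_append] at hdisj ⊢
  obtain ⟨hnodup₂, hnodup₁, hdisj'⟩ := List.nodup_append'.mp (hperm.nodup_iff.mp hnodup)
  obtain ⟨hdisj₂, hdisj₁⟩ := disjoint_union_right.mp hdisj
  obtain ⟨hq₁, hq₂⟩ := List.isChain_split.mp hq
  have hchain₂ : (a :: (c ++ y :: l₂)).IsChain G.Adj := List.isChain_cons_split.mpr ⟨hc, hq₂⟩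
  have hchain₁ : (y :: l₁.reverse).IsChain G.Adj := by
    rw [← List.reverse_concat', List.isChain_reverse]
    exact hq₁.imp fun _ _ h ↦ h.symm
  rw [← union_assoc]
  refine (hA.append_path ha hchain₂ hnodup₂ hdisj₂).append_path (by simp) hchain₁ hnodup₁ ?_
  exact disjoint_union_left.mpr ⟨hdisj₁, List.disjoint_toFinset_iff_disjoint.mpr hdisj'⟩

lemma IsPathFamily.exists_connect_one {Q : List (List V)} (hQ : IsPathFamily G Q) (hne : Q ≠ [])
    (hG : G.Preconnected) (hA : HasRootedTree G r A z) (hdisj : Disjoint A (pathSupport Q))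
    (hdom : IsDominating G (A ∪ pathSupport Q)) :
    ∃ A' Q', IsPathFamily G Q' ∧ Q.length = Q'.length + 1 ∧ HasRootedTree G r A' (z + 6) ∧
      Disjoint A' (pathSupport Q') ∧ A ∪ pathSupport Q ⊆ A' ∪ pathSupport Q' ∧
      #(A' ∪ pathSupport Q') ≤ #(A ∪ pathSupport Q) + 2 := by
  obtain ⟨a, ha, y, hy, c, hchain, hnodup, hlen, hc⟩ :=
    exists_short_connection hG ⟨r, hA.root_mem⟩ (hQ.pathSupport_nonempty hne) hdom hdisj
  obtain ⟨q, hq, hyq⟩ := List.mem_flatten.mp (List.mem_toFinset.mp hy)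
  obtain ⟨l₁, l₂, hq'⟩ := List.append_of_mem hyq
  have hperm : Q.Perm (q :: Q.erase q) := List.perm_cons_erase hq
  have hQq : IsPathFamily G (q :: Q.erase q) := hQ.perm hperm
  have hsupp : pathSupport Q = q.toFinset ∪ pathSupport (Q.erase q) := by
    rw [pathSupport_perm hperm, pathSupport_cons]
  rw [hsupp] at hdisj hc ⊢
  obtain ⟨hcA, hcq, hcQ⟩ : Disjoint c.toFinset A ∧ Disjoint c.toFinset q.toFinset ∧
      Disjoint c.toFinset (pathSupport (Q.erase q)) := by
    simpa only [disjoint_union_right] using hc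
  obtain ⟨hAq, hAQ⟩ := disjoint_union_right.mp hdisj
  refine ⟨A ∪ (c ++ q).toFinset, Q.erase q, hQq.of_cons, by simpa using hperm.length_eq, ?_, ?_,
    ?_, ?_⟩
  · subst hq'
    refine hA.append_connected_path ha hchain (hQ.isChain _ hq) ?_ ?_
    · exact hnodup.append (List.nodup_append.mp hQq.nodup_flatten).1
        (List.disjoint_toFinset_iff_disjoint.mp hcq)
    · rw [List.toFinset_append]
      exact disjoint_union_right.mpr ⟨hcA.symm, hAq⟩
  · rw [List.toFinset_append]
    exact disjoint_union_left.mpr ⟨hAQ, disjoint_union_left.mpr ⟨hcQ, hQq.disjoint_of_cons⟩⟩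
  · grind [List.toFinset_append]
  · calc #(A ∪ (c ++ q).toFinset ∪ pathSupport (Q.erase q))
        = #((A ∪ (q.toFinset ∪ pathSupport (Q.erase q))) ∪ c.toFinset) := by
          congr 1; grind [List.toFinset_append]
      _ ≤ #(A ∪ (q.toFinset ∪ pathSupport (Q.erase q))) + #c.toFinset := card_union_le _ _
      _ ≤ _ := Nat.add_le_add_left ((List.toFinset_card_le c).trans hlen) _

lemma IsPathFamily.exists_connect {Q : List (List V)} (hQ : IsPathFamily G Q)
    (hG : G.Preconnected) (hA : HasRootedTree G r A z) (hdisj : Disjoint A (pathSupport Q))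
    (hdom : IsDominating G (A ∪ pathSupport Q)) :
    ∃ A', A ∪ pathSupport Q ⊆ A' ∧ HasRootedTree G r A' (z + 6 * Q.length) ∧
      #A' ≤ #(A ∪ pathSupport Q) + 2 * Q.length := by
  induction hk : Q.length generalizing Q A z with
  | zero =>
    obtain rfl := List.length_eq_zero_iff.mp hk
    exact ⟨A, by simp [pathSupport], by simpa using hA, by simp [pathSupport]⟩
  | succ k ih =>
    obtain ⟨A₁, Q₁, hQ₁, hlen, hA₁, hdisj₁, hsub, hcard⟩ :=
      hQ.exists_connect_one (List.ne_nil_of_length_eq_add_one hk) hG hA hdisj hdom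
    obtain ⟨A', hsub', hA', hcard'⟩ := ih hQ₁ hA₁ hdisj₁ (hdom.mono hsub) (by omega)
    exact ⟨A', hsub.trans hsub', hA'.mono (by omega), by omega⟩

lemma IsPathFamily.exists_hasRootedTree {Q : List (List V)} (hQ : IsPathFamily G Q)
    (hG : G.Connected) (hdom : IsDominating G (pathSupport Q)) :
    ∃ r A, pathSupport Q ⊆ A ∧ HasRootedTree G r A (6 * Q.length) ∧
      #A ≤ #(pathSupport Q) + 2 * Q.length := by
  obtain _ | ⟨_ | ⟨r, l⟩, Q⟩ := Q
  · obtain ⟨v⟩ := hG.nonempty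
    simpa [pathSupport] using hdom v
  · exact absurd rfl (hQ.ne_nil [] (by simp))
  have hnodup : (r :: l).Nodup := (List.nodup_append.mp hQ.nodup_flatten).1
  have hr : HasRootedTree G r (r :: l).toFinset 5 := by
    have h := (HasRootedTree.singleton G r).append_path (mem_singleton_self r)
      (hQ.isChain (r :: l) (by simp)) hnodup.of_cons (by simpa using (List.nodup_cons.mp hnodup).1)
    rwa [← insert_eq, ← List.toFinset_cons] at h
  rw [pathSupport_cons] at hdom ⊢
  obtain ⟨A, hsub, hA, hcard⟩ :=
    hQ.of_cons.exists_connect hG.preconnected hr hQ.disjoint_of_cons hdom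
  rw [List.length_cons]
  exact ⟨r, A, hsub, hA.mono (by omega), by omega⟩

end Connecting

section ParentGraph

variable {V : Type*} {G : SimpleGraph V} {r : V} {A L B : Finset V} {p p₁ p₂ : V → V} {h : V → ℕ}

/-- The graph in which every vertex `v ≠ r` is joined to its parent `p v`. -/
def parentGraph (r : V) (p : V → V) : SimpleGraph V :=
  SimpleGraph.fromRel fun v w ↦ v ≠ r ∧ p v = w

lemma parentGraph_adj {v w : V} :
    (parentGraph r p).Adj v w ↔ v ≠ w ∧ (v ≠ r ∧ p v = w ∨ w ≠ r ∧ p w = v) :=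
  SimpleGraph.fromRel_adj _ v w

lemma parentGraph_connected (hp : ∀ v ≠ r, h (p v) < h v) : (parentGraph r p).Connected := by
  have hreach (v : V) : (parentGraph r p).Reachable v r := by
    induction hv : h v using Nat.strong_induction_on generalizing v with
    | _ k ih =>
    obtain rfl | hvr := eq_or_ne v r
    · rfl
    have hlt := hp v hvr
    have hadj : (parentGraph r p).Adj v (p v) :=
      parentGraph_adj.mpr ⟨fun e ↦ hlt.ne (congrArg h e.symm), .inl ⟨hvr, rfl⟩⟩
    exact hadj.reachable.trans (ih _ (hv ▸ hlt) _ rfl)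
  have : Nonempty V := ⟨r⟩
  exact ⟨fun u v ↦ (hreach u).trans (hreach v).symm⟩

lemma parentGraph_isTree [Finite V] (hp : ∀ v ≠ r, h (p v) < h v) : (parentGraph r p).IsTree := by
  have hconn := parentGraph_connected hp
  refine SimpleGraph.isTree_iff_connected_and_card.mpr
    ⟨hconn, le_antisymm ?_ hconn.card_vert_le_card_edgeSet_add_one⟩
  have hsub : (parentGraph r p).edgeSet ⊆ (fun v ↦ s(v, p v)) '' {r}ᶜ := by
    intro e
    induction e using Sym2.ind with
    | _ v w =>
    rw [SimpleGraph.mem_edgeSet, parentGraph_adj]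
    rintro ⟨-, ⟨hv, rfl⟩ | ⟨hw, rfl⟩⟩
    · exact ⟨v, hv, rfl⟩
    · exact ⟨w, hw, Sym2.eq_swap⟩
  calc Nat.card (parentGraph r p).edgeSet + 1 ≤ ({r}ᶜ : Set V).ncard + 1 := by
        gcongr
        exact (Set.ncard_le_ncard hsub).trans Set.ncard_image_le
    _ = Nat.card V := by rw [← Set.ncard_singleton r, add_comm, Set.ncard_add_ncard_compl]

/-- `p'` extends the parent map `p` of a tree on `A` to a spanning tree of `G` in which every
vertex outside `A` is a leaf attached to a vertex of `A`. -/
structure IsLeafExtension (G : SimpleGraph V) (A : Finset V) (p p' : V → V) : Prop where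
  eqOn : Set.EqOn p' p A
  parent_mem : ∀ v ∉ A, p' v ∈ A
  adj_parent : ∀ v ∉ A, G.Adj v (p' v)

lemma IsRootedTree.parent_ne (hT : IsRootedTree G r A p h L B) {u : V} (hu : u ∈ A) (hur : u ≠ r) :
    p u ≠ u :=
  fun e ↦ (hT.height_lt u hu hur).ne (congrArg h e)

namespace IsLeafExtension

lemma parent_mem_of_ne_root (hp₁ : IsLeafExtension G A p p₁) (hT : IsRootedTree G r A p h L B)
    {v : V} (hv : v ≠ r) : p₁ v ∈ A := by
  by_cases hvA : v ∈ A
  · exact hp₁.eqOn hvA ▸ hT.parent_mem v hvA hv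
  · exact hp₁.parent_mem v hvA

lemma parentGraph_le (hp₁ : IsLeafExtension G A p p₁) (hT : IsRootedTree G r A p h L B) :
    parentGraph r p₁ ≤ G := by
  have hadj {v : V} (hv : v ≠ r) : G.Adj v (p₁ v) := by
    by_cases hvA : v ∈ A
    · exact hp₁.eqOn hvA ▸ hT.adj_parent v hvA hv
    · exact hp₁.adj_parent v hvA
  intro v w hvw
  obtain ⟨-, ⟨hv, rfl⟩ | ⟨hw, rfl⟩⟩ := parentGraph_adj.mp hvw
  · exact hadj hv
  · exact (hadj hw).symm

lemma parentGraph_isTree [Finite V] (hp₁ : IsLeafExtension G A p p₁)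
    (hT : IsRootedTree G r A p h L B) : (parentGraph r p₁).IsTree := by
  classical
  refine _root_.parentGraph_isTree (h := fun v ↦ if v ∈ A then h v else A.sup h + 1) fun v hv ↦ ?_
  rw [if_pos (hp₁.parent_mem_of_ne_root hT hv)]
  split_ifs with hvA
  · exact hp₁.eqOn hvA ▸ hT.height_lt v hvA hv
  · exact Nat.lt_succ_of_le (le_sup (hp₁.parent_mem v hvA))

lemma eq_parent_of_adj (hp₁ : IsLeafExtension G A p p₁) (hT : IsRootedTree G r A p h L B)
    {t y : V} (ht : t ∉ A) (hty : (parentGraph r p₁).Adj t y) : y = p₁ t := by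
  obtain ⟨-, ⟨-, rfl⟩ | ⟨hyr, rfl⟩⟩ := parentGraph_adj.mp hty
  · rfl
  · exact absurd (hp₁.parent_mem_of_ne_root hT hyr) ht

lemma parentGraph_adj_parent (hp₁ : IsLeafExtension G A p p₁) (hT : IsRootedTree G r A p h L B)
    {u : V} (hu : u ∈ A) (hur : u ≠ r) : (parentGraph r p₁).Adj u (p u) :=
  parentGraph_adj.mpr ⟨(hT.parent_ne hu hur).symm, .inl ⟨hur, hp₁.eqOn hu⟩⟩

lemma eq_parent_or_mem_children_of_adj (hp₁ : IsLeafExtension G A p p₁) {v t : V}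
    (hv : v ∈ A) (ht : t ∈ A) (hvt : (parentGraph r p₁).Adj v t) :
    t = p v ∨ t ∈ children r A p v := by
  obtain ⟨-, ⟨-, h⟩ | ⟨htr, h⟩⟩ := parentGraph_adj.mp hvt
  · exact .inl (h.symm.trans (hp₁.eqOn hv))
  · exact .inr ⟨ht, htr, (hp₁.eqOn ht).symm.trans h⟩

lemma iso_apply_eq_of_parent (hp₁ : IsLeafExtension G A p p₁) (hp₂ : IsLeafExtension G A p p₂)
    (hT : IsRootedTree G r A p h L B) (σ : parentGraph r p₁ ≃g parentGraph r p₂) {u : V}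
    (hu : u ∈ A) (huL : u ∉ L) (huB : u ∉ B) (hparent : σ (p u) = p u)
    (hgrandparent : σ (p (p u)) = p (p u)) : σ u = u := by
  have hur := hT.ne_root u hu huB
  have hpr := hT.parent_ne_root u hu huB
  have hpA := hT.parent_mem u hu hur
  obtain ⟨c, hcA, hcr, rfl⟩ := hT.children_nonempty u hu huL
  have hadj_parent : (parentGraph r p₂).Adj (σ (p c)) (p (p c)) := by
    rw [← hparent]
    exact σ.map_adj_iff.mpr (hp₁.parentGraph_adj_parent hT hu hur)
  have hadj_child : (parentGraph r p₂).Adj (σ (p c)) (σ c) :=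
    σ.map_adj_iff.mpr (hp₁.parentGraph_adj_parent hT hcA hcr).symm
  have hmem : σ (p c) ∈ A := by
    by_contra hnot
    have hc : σ c = σ (p (p c)) := (hp₂.eq_parent_of_adj hT hnot hadj_child).trans
      ((hp₂.eq_parent_of_adj hT hnot hadj_parent).symm.trans hparent.symm)
    have hlt := (hT.height_lt _ hu hur).trans (hT.height_lt c hcA hcr)
    exact hlt.ne (congrArg h (σ.injective hc)).symm
  obtain heq | hchild := hp₂.eq_parent_or_mem_children_of_adj hpA hmem hadj_parent.symm
  · have hlt := (hT.height_lt _ hpA hpr).trans (hT.height_lt _ hu hur)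
    exact absurd (congrArg h (σ.injective (heq.trans hgrandparent.symm))) hlt.ne'
  · exact hT.siblings_subsingleton _ hu huB hchild ⟨hu, hur, rfl⟩

lemma iso_apply_eq (hp₁ : IsLeafExtension G A p p₁) (hp₂ : IsLeafExtension G A p p₂)
    (hT : IsRootedTree G r A p h L B) (σ : parentGraph r p₁ ≃g parentGraph r p₂) (hr : σ r = r)
    (hσ : ∀ u ∈ A, u ≠ r → u ∈ L ∨ u ∈ B → σ (p u) = p u → σ u = u) {u : V} (hu : u ∈ A) :
    σ u = u := by
  induction hk : h u using Nat.strong_induction_on generalizing u with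
  | _ k ih =>
  subst hk
  obtain rfl | hur := eq_or_ne u r
  · exact hr
  have hparent : σ (p u) = p u :=
    ih _ (hT.height_lt u hu hur) (hT.parent_mem u hu hur) rfl
  by_cases huLB : u ∈ L ∨ u ∈ B
  · exact hσ u hu hur huLB hparent
  push Not at huLB
  have hpA := hT.parent_mem u hu hur
  have hpr := hT.parent_ne_root u hu huLB.2
  refine hp₁.iso_apply_eq_of_parent hp₂ hT σ hu huLB.1 huLB.2 hparent ?_
  exact ih _ ((hT.height_lt _ hpA hpr).trans (hT.height_lt u hu hur)) (hT.parent_mem _ hpA hpr) rfl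

end IsLeafExtension

end ParentGraph

section Counting

variable {V : Type*}

lemma exists_subset_image_pairwise_isEmpty_iso {ι : Type*} (s : Finset ι) (T : ι → SimpleGraph V)
    (M : ℕ) (hM : ∀ i ∈ s, ∀ s' ⊆ s, (∀ j ∈ s', Nonempty (T j ≃g T i)) → #s' ≤ M) :
    ∃ S : Finset (SimpleGraph V), (∀ H ∈ S, ∃ i ∈ s, T i = H) ∧
      (S : Set (SimpleGraph V)).Pairwise (fun H H' ↦ IsEmpty (H ≃g H')) ∧ #s ≤ M * #S := by
  classical
  let isoSetoid : Setoid (SimpleGraph V) :=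
    { r := fun H H' ↦ Nonempty (H ≃g H')
      iseqv := ⟨fun _ ↦ ⟨.refl⟩, fun ⟨f⟩ ↦ ⟨f.symm⟩, fun ⟨f⟩ ⟨g⟩ ↦ ⟨f.trans g⟩⟩ }
  let cls (H : SimpleGraph V) : Quotient isoSetoid := ⟦H⟧
  obtain ⟨S, hST, hinj, himage⟩ := exists_subset_injOn_image_eq_of_surjOn (f := cls) (T '' s)
    (s.image (cls ∘ T)) (by rw [coe_image, Set.image_comp]; exact Set.surjOn_image _ _)
  refine ⟨S, fun H hH ↦ hST hH, fun H hH H' hH' hne ↦ ?_, ?_⟩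
  · exact not_nonempty_iff.mp fun hiso ↦ hne (hinj hH hH' (Quotient.sound hiso))
  · rw [← card_image_of_injOn hinj, himage]
    refine card_le_mul_card_image s M (forall_mem_image.mpr fun i hi ↦ ?_)
    exact hM i hi _ (filter_subset _ _) fun j hj ↦ Quotient.exact (mem_filter.mp hj).2

variable {G : SimpleGraph V} {r : V} {A L B : Finset V} {p : V → V} {h : V → ℕ}

lemma exists_neighbor_labelling [Fintype V] (G : SimpleGraph V) [DecidableRel G.Adj]
    (hG : 0 < G.maxDegree) :
    ∃ label : V → V → Fin G.maxDegree, ∀ w, Set.InjOn (label w) (G.neighborSet w) := by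
  have : NeZero G.maxDegree := ⟨hG.ne'⟩
  refine Classical.skolem.mp fun w ↦ Set.exists_injOn_iff_injective.mpr ?_
  have hcard : Fintype.card (G.neighborSet w) ≤ Fintype.card (Fin G.maxDegree) := by
    rw [Fintype.card_fin, SimpleGraph.card_neighborSet_eq_degree]
    exact G.degree_le_maxDegree w
  obtain ⟨f⟩ := Function.Embedding.nonempty_of_card_le hcard
  exact ⟨f, f.injective⟩

/- An isomorphism `f` onto `T₀` is determined on `A` by `f r` and, for each `u ∈ L ∪ B`, the label
of `f u` among the neighbours of `f (p u)`. -/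
lemma IsRootedTree.card_le_of_forall_iso [Fintype V] [DecidableRel G.Adj] {ι : Type*}
    (hT : IsRootedTree G r A p h L B) (hG : 0 < G.maxDegree) {p' : ι → V → V} {s : Finset ι}
    (hp' : ∀ i ∈ s, IsLeafExtension G A p (p' i))
    (hs : ∀ i ∈ s, ∀ j ∈ s, ∀ σ : parentGraph r (p' i) ≃g parentGraph r (p' j),
      (∀ u ∈ A, σ u = u) → i = j)
    {T₀ : SimpleGraph V} (hT₀ : T₀ ≤ G) (hiso : ∀ i ∈ s, Nonempty (parentGraph r (p' i) ≃g T₀)) :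
    #s ≤ Fintype.card V * G.maxDegree ^ (#L + #B) := by
  classical
  obtain ⟨label, hlabel⟩ := exists_neighbor_labelling G hG
  have f (i : s) : parentGraph r (p' i) ≃g T₀ := (hiso i i.2).some
  let code (i : s) : V × ((L ∪ B : Finset V) → Fin G.maxDegree) :=
    (f i r, fun u ↦ label (f i (p u)) (f i u))
  have hcode : Function.Injective code := by
    intro i j hij
    obtain ⟨hroot, hlabels⟩ := Prod.mk.inj hij
    refine Subtype.ext (hs i i.2 j j.2 ((f i).trans (f j).symm) fun u hu ↦ ?_)
    refine (hp' i i.2).iso_apply_eq (hp' j j.2) hT _ ?_ (fun u hu hur huLB hpu ↦ ?_) hu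
    · exact (f j).symm_apply_eq.mpr hroot
    · replace hpu : f i (p u) = f j (p u) := (f j).symm_apply_eq.mp hpu
      have hadj (k : s) : G.Adj (f k (p u)) (f k u) :=
        hT₀ ((f k).map_adj_iff.mpr ((hp' k k.2).parentGraph_adj_parent hT hu hur).symm)
      have hlabels_u : label (f i (p u)) (f i u) = label (f j (p u)) (f j u) :=
        congrFun hlabels ⟨u, mem_union.mpr huLB⟩
      rw [← hpu] at hlabels_u
      exact (f j).symm_apply_eq.mpr (hlabel _ (hadj i) (hpu ▸ hadj j) hlabels_u)
  calc #s = Fintype.card s := (Fintype.card_coe s).symm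
    _ ≤ Fintype.card (V × ((L ∪ B : Finset V) → Fin G.maxDegree)) :=
        Fintype.card_le_of_injective code hcode
    _ = Fintype.card V * G.maxDegree ^ #(L ∪ B) := by
        rw [Fintype.card_prod, Fintype.card_fun, Fintype.card_fin, Fintype.card_coe]
    _ ≤ _ := Nat.mul_le_mul_left _ (Nat.pow_le_pow_right hG (card_union_le L B))

variable {X Y Y' : Finset V} {a b q : V → V}

/-- The parent map that extends `p` by hanging `v ∈ X` below `a v` if `v ∈ Y` and below `b v`
otherwise, and every other vertex outside `A` below `q v`. -/
def switchParent [DecidableEq V] (A X : Finset V) (p a b q : V → V) (Y : Finset V) (v : V) : V :=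
  if v ∈ A then p v else if v ∈ X then if v ∈ Y then a v else b v else q v

lemma isLeafExtension_switchParent [DecidableEq V] (hX : IsCherryFamily G A X a b)
    (hq : ∀ v ∉ A, q v ∈ A) (hq' : ∀ v ∉ A, G.Adj v (q v)) (Y : Finset V) :
    IsLeafExtension G A p (switchParent A X p a b q Y) := by
  refine ⟨fun v hv ↦ if_pos hv, fun v hv ↦ ?_, fun v hv ↦ ?_⟩ <;> rw [switchParent, if_neg hv]
  · split_ifs with hvX hvY
    exacts [hX.left_mem v hvX, hX.right_mem v hvX, hq v hv]
  · split_ifs with hvX hvY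
    exacts [hX.adj_left v hvX, hX.adj_right v hvX, hq' v hv]

lemma IsCherryFamily.switchParent_eq_left_mono [DecidableEq V] (hX : IsCherryFamily G A X a b)
    {x y : V} (hx : x ∈ X) (hxY : x ∈ Y) (hy : switchParent A X p a b q Y' y = a x) :
    switchParent A X p a b q Y y = a x := by
  unfold switchParent at hy ⊢
  split_ifs at hy ⊢ with hyA hyX hyY hyY'
  all_goals try exact hy
  · exact absurd hy.symm (hX.left_ne_right x hx y hyX)
  · exact absurd (hX.left_injOn hyX hx hy ▸ hxY) hyY

lemma IsCherryFamily.neighborSet_ssubset [DecidableEq V] (hX : IsCherryFamily G A X a b)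
    (hXA : Disjoint X A) (hT : IsRootedTree G r A p h L B) {x : V} (hx : x ∈ X)
    (hxY : x ∈ Y) (hxY' : x ∉ Y') :
    (parentGraph r (switchParent A X p a b q Y')).neighborSet (a x) ⊂
      (parentGraph r (switchParent A X p a b q Y)).neighborSet (a x) := by
  have hxA : x ∉ A := disjoint_left.mp hXA hx
  have haA : a x ∈ A := hX.left_mem x hx
  have hax : a x ≠ x := ne_of_mem_of_not_mem haA hxA
  have hxr : x ≠ r := (ne_of_mem_of_not_mem hT.root_mem hxA).symm
  have hp (Z : Finset V) : switchParent A X p a b q Z (a x) = p (a x) := if_pos haA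
  refine (Set.ssubset_iff_of_subset fun y hy ↦ ?_).mpr ⟨x, ?_, fun hmem ↦ ?_⟩
  · obtain ⟨hne, ⟨har, hy⟩ | ⟨hyr, hy⟩⟩ := parentGraph_adj.mp hy
    · exact parentGraph_adj.mpr ⟨hne, .inl ⟨har, by rwa [hp] at hy ⊢⟩⟩
    · exact parentGraph_adj.mpr ⟨hne, .inr ⟨hyr, hX.switchParent_eq_left_mono hx hxY hy⟩⟩
  · exact parentGraph_adj.mpr ⟨hax, .inr ⟨hxr, by simp [switchParent, hxA, hx, hxY]⟩⟩
  · obtain ⟨-, ⟨har, hy⟩ | ⟨-, hy⟩⟩ := parentGraph_adj.mp hmem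
    · rw [hp] at hy
      exact hxA (hy ▸ hT.parent_mem _ haA har)
    · rw [switchParent, if_neg hxA, if_pos hx, if_neg hxY'] at hy
      exact hX.left_ne_right x hx x hx hy.symm

lemma IsCherryFamily.subset_of_iso [Finite V] [DecidableEq V] (hX : IsCherryFamily G A X a b)
    (hXA : Disjoint X A) (hT : IsRootedTree G r A p h L B) (hY : Y ⊆ X)
    (σ : parentGraph r (switchParent A X p a b q Y) ≃g
      parentGraph r (switchParent A X p a b q Y'))
    (hσ : ∀ u ∈ A, σ u = u) : Y ⊆ Y' := by
  intro x hxY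
  by_contra hxY'
  have hlt := Set.ncard_lt_ncard (hX.neighborSet_ssubset (q := q) hXA hT (hY hxY) hxY hxY')
  have heq := Nat.card_congr (σ.mapNeighborSet (a x))
  rw [hσ _ (hX.left_mem x (hY hxY))] at heq
  exact hlt.ne' heq

lemma HasRootedTree.exists_nonisomorphic_spanning_trees [Fintype V] [DecidableRel G.Adj] {z : ℕ}
    (hA : HasRootedTree G r A z) (hG : 0 < G.maxDegree) (hdom : IsDominating G A)
    (hX : IsCherryFamily G A X a b) (hXA : Disjoint X A) :
    ∃ S : Finset (SimpleGraph V), (∀ H ∈ S, H ≤ G ∧ H.IsTree) ∧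
      (S : Set (SimpleGraph V)).Pairwise (fun H H' ↦ IsEmpty (H ≃g H')) ∧
      2 ^ #X ≤ Fintype.card V * G.maxDegree ^ z * #S := by
  classical
  obtain ⟨p, h, L, B, hT, hz⟩ := hA
  choose! q hq hq' using hdom
  let p' (Y : Finset V) : V → V := switchParent A X p a b q Y
  have hext (Y : Finset V) : IsLeafExtension G A p (p' Y) :=
    isLeafExtension_switchParent hX hq hq' Y
  have hfix : ∀ Y ∈ X.powerset, ∀ Y' ∈ X.powerset,
      ∀ σ : parentGraph r (p' Y) ≃g parentGraph r (p' Y'), (∀ u ∈ A, σ u = u) → Y = Y' := by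
    intro Y hY Y' hY' σ hσ
    refine (hX.subset_of_iso hXA hT (mem_powerset.mp hY) σ hσ).antisymm
      (hX.subset_of_iso hXA hT (mem_powerset.mp hY') σ.symm fun u hu ↦ ?_)
    exact σ.symm_apply_eq.mpr (hσ u hu).symm
  obtain ⟨S, hS, hpair, hcard⟩ := exists_subset_image_pairwise_isEmpty_iso X.powerset
    (fun Y ↦ parentGraph r (p' Y)) (Fintype.card V * G.maxDegree ^ (#L + #B))
    fun Y _ s hs hiso ↦ hT.card_le_of_forall_iso hG (fun Y _ ↦ hext Y)
      (fun Y hY Y' hY' ↦ hfix Y (hs hY) Y' (hs hY')) ((hext Y).parentGraph_le hT) hiso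
  refine ⟨S, fun H hH ↦ ?_, hpair, ?_⟩
  · obtain ⟨Y, -, rfl⟩ := hS H hH
    exact ⟨(hext Y).parentGraph_le hT, (hext Y).parentGraph_isTree hT⟩
  · rw [← card_powerset]
    exact hcard.trans (by gcongr)

end Counting

section Assembly

lemma card_sub_card_mul_le_sum {ι : Type*} {Y bad : Finset ι} {f : ι → ℕ} {c : ℝ} (hc : 0 ≤ c)
    (hf : ∀ y ∈ Y, y ∉ bad → c ≤ f y) : (#Y - #bad : ℝ) * c ≤ (∑ y ∈ Y, f y : ℕ) := by
  classical
  have hgood : #(Y \ bad) • c ≤ ∑ y ∈ Y \ bad, (f y : ℝ) :=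
    card_nsmul_le_sum _ _ _ fun y hy ↦ hf y (mem_sdiff.mp hy).1 (mem_sdiff.mp hy).2
  have hcard : (#Y : ℝ) ≤ #(Y \ bad) + #bad := mod_cast card_le_card_sdiff_add_card
  calc (#Y - #bad : ℝ) * c ≤ #(Y \ bad) * c := by gcongr; linarith
    _ ≤ ∑ y ∈ Y \ bad, (f y : ℝ) := by rwa [nsmul_eq_mul] at hgood
    _ ≤ (∑ y ∈ Y, f y : ℕ) := mod_cast sum_le_sum_of_subset sdiff_subset

variable {V : Type*} [Fintype V] {G : SimpleGraph V} [DecidableRel G.Adj]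

variable (G) in
lemma sum_degIn_le_card_mul_maxDegree (A B : Finset V) :
    ∑ v ∈ A, degIn G B v ≤ #A * G.maxDegree :=
  sum_le_card_nsmul _ _ _ fun v _ ↦ (degIn_le_degree G B v).trans (G.degree_le_maxDegree v)

variable {S bad X : Finset V} {c : ℝ} {l : ℕ}

lemma card_univ_sub_card_mul_le (hc : 0 ≤ c) (hS : ∀ v ∉ bad, c ≤ degIn G S v) :
    (Fintype.card V - #bad : ℝ) * c ≤ #S * G.maxDegree := by
  have hsum : (#(univ : Finset V) - #bad : ℝ) * c ≤ (∑ v, degIn G S v : ℕ) :=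
    card_sub_card_mul_le_sum hc fun v _ ↦ hS v
  rw [sum_degIn_comm, card_univ] at hsum
  exact hsum.trans (mod_cast sum_degIn_le_card_mul_maxDegree G S univ)

lemma exists_cherryFamily_subset (hc : 0 ≤ c) (hX : ∀ v ∉ bad, c ≤ degIn G X v) (P : Finset V) :
    ∃ X₀ a b, X₀ ⊆ X ∧ IsCherryFamily G P X₀ a b ∧
      (#P - #bad : ℝ) * c ≤ 3 * G.maxDegree * #X₀ + Fintype.card V := by
  obtain ⟨X₀, a, b, hX₀, hcherry, hsum⟩ := exists_cherryFamily_sum_degIn_le G X P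
  refine ⟨X₀, a, b, hX₀, hcherry, (card_sub_card_mul_le_sum hc fun v _ ↦ hX v).trans ?_⟩
  rw [sum_degIn_comm]
  exact_mod_cast hsum.trans (by gcongr; exact card_le_univ X)

variable [DecidableEq V]

lemma exists_pathFamily_subset (hc : 0 ≤ c) (hl : 0 < l) (hS : ∀ v ∉ bad, c ≤ degIn G S v) :
    ∃ Q, IsPathFamily G Q ∧ (∀ q ∈ Q, q.length = l) ∧ pathSupport Q ⊆ S ∧
      (#S - #bad : ℝ) * c ≤ 2 * l * Fintype.card V + #(pathSupport Q) * (G.maxDegree + c) := by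
  obtain ⟨Q, hQ, hlen, hQS, hleft⟩ := exists_pathFamily_sum_degIn_sdiff_le G hl S
  set P := pathSupport Q
  refine ⟨Q, hQ, hlen, hQS, ?_⟩
  have hlow : (#(S \ P) - #bad : ℝ) * c ≤ (∑ v ∈ S \ P, degIn G S v : ℕ) :=
    card_sub_card_mul_le_sum hc fun v _ ↦ hS v
  have hupp : ∑ v ∈ S \ P, degIn G S v ≤ 2 * l * Fintype.card V + #P * G.maxDegree := by
    calc ∑ v ∈ S \ P, degIn G S v
        = ∑ v ∈ S \ P, degIn G (S \ P) v + ∑ v ∈ P, degIn G (S \ P) v := by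
          rw [sum_degIn_comm G P, ← sum_add_distrib]
          exact sum_congr rfl fun v _ ↦ (degIn_sdiff_add_degIn G hQS v).symm
      _ ≤ 2 * l * #S + #P * G.maxDegree :=
          add_le_add hleft (sum_degIn_le_card_mul_maxDegree G _ _)
      _ ≤ _ := by gcongr; exact card_le_univ S
  have hcard : (#(S \ P) : ℝ) + #P = #S := mod_cast card_sdiff_add_card_eq_card hQS
  have hupp' : ((∑ v ∈ S \ P, degIn G S v : ℕ) : ℝ) ≤ 2 * l * Fintype.card V + #P * G.maxDegree :=
    mod_cast hupp
  linear_combination hlow + hupp' - c * hcard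

lemma card_filter_forall_not_adj_sub_card_mul_le {W Z : Finset V} (hc : 0 ≤ c)
    (hS : ∀ v ∉ bad, c ≤ degIn G S v) (hSWZ : S ⊆ W ∪ Z) :
    (#{v ∈ W | ∀ w ∈ Z, ¬ G.Adj v w} - #bad : ℝ) * c ≤ (∑ w ∈ W, degIn G W w : ℕ) := by
  set E : Finset V := {v ∈ W | ∀ w ∈ Z, ¬ G.Adj v w}
  have hdeg (v : V) (hv : v ∈ E) : degIn G S v ≤ degIn G W v :=
    card_le_card fun w hw ↦ by grind
  refine (card_sub_card_mul_le_sum (f := degIn G W) hc fun v hv hvbad ↦ ?_).trans ?_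
  · exact (hS v hvbad).trans (mod_cast hdeg v hv)
  · exact_mod_cast sum_le_sum_of_subset (filter_subset _ W)

/- Besides `Q`, the family consists of further paths of length `l` covering almost all of the
remaining graph and, as paths with one vertex, of the few vertices still not dominated. -/
lemma IsPathFamily.exists_dominating_extension {Q : List (List V)} (hQ : IsPathFamily G Q)
    (hlen : ∀ q ∈ Q, q.length = l) (hl : 0 < l) (hc : 0 < c) (hS : ∀ v ∉ bad, c ≤ degIn G S v)
    (hXS : Disjoint X S) (hXQ : Disjoint X (pathSupport Q))
    (hXdom : ∀ x ∈ X, ∃ w ∈ pathSupport Q, G.Adj x w) :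
    ∃ Q', IsPathFamily G Q' ∧ pathSupport Q ⊆ pathSupport Q' ∧ Disjoint X (pathSupport Q') ∧
      IsDominating G (pathSupport Q') ∧
      (Q'.length : ℝ) ≤ Fintype.card V / l + #bad + 2 * l * Fintype.card V / c := by
  set U := (pathSupport Q ∪ X)ᶜ
  obtain ⟨R, hR, hRlen, hRU, hleft⟩ := exists_pathFamily_sum_degIn_sdiff_le G hl U
  set W := U \ pathSupport R
  have hQR : IsPathFamily G (Q ++ R) := hQ.append hR (by grind [mem_compl, disjoint_left])
  set Z := pathSupport (Q ++ R) with hZ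
  rw [pathSupport_append] at hZ
  set E : Finset V := {v ∈ W | ∀ w ∈ Z, ¬ G.Adj v w}
  obtain ⟨Q', hQ', hsupp, hlength⟩ :=
    hQR.exists_pathSupport_eq_union (E := E) (by grind [mem_compl, disjoint_left])
  refine ⟨Q', hQ', by grind, by grind [mem_compl, disjoint_left], fun v hv ↦ ?_, ?_⟩
  · by_cases hvX : v ∈ X
    · obtain ⟨w, hw, hvw⟩ := hXdom v hvX
      exact ⟨w, by grind, hvw⟩
    · have hvW : v ∈ W := by grind [mem_compl]
      grind
  · have hcard : (Q.length + R.length) * l ≤ Fintype.card V := by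
      rw [← List.length_append, ← hQR.card_pathSupport (by grind)]
      exact card_le_univ _
    have hSWZ : S ⊆ W ∪ Z := by grind [mem_compl, disjoint_left]
    have hE : (#E - #bad : ℝ) * c ≤ 2 * l * Fintype.card V := by
      refine (card_filter_forall_not_adj_sub_card_mul_le hc.le hS hSWZ).trans ?_
      exact_mod_cast hleft.trans (by gcongr; exact card_le_univ U)
    have hpaths : (Q.length + R.length : ℝ) ≤ Fintype.card V / l := by
      rw [le_div_iff₀ (by positivity)]
      exact_mod_cast hcard
    rw [← le_div_iff₀ hc] at hE
    rw [hlength, List.length_append]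
    push_cast
    linarith

lemma IsPathFamily.exists_nonisomorphic_spanning_trees {Q : List (List V)} {a b : V → V}
    (hQ : IsPathFamily G Q) (hG : G.Connected) (hD : 0 < G.maxDegree)
    (hdom : IsDominating G (pathSupport Q)) (hX : IsCherryFamily G (pathSupport Q) X a b)
    (hXQ : Disjoint X (pathSupport Q)) :
    ∃ T : Finset (SimpleGraph V), (∀ H ∈ T, H ≤ G ∧ H.IsTree) ∧
      (T : Set (SimpleGraph V)).Pairwise (fun H H' ↦ IsEmpty (H ≃g H')) ∧
      2 ^ (#X - 2 * Q.length) ≤ Fintype.card V * G.maxDegree ^ (6 * Q.length) * #T := by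
  obtain ⟨r, A, hQA, htree, hcard⟩ := hQ.exists_hasRootedTree hG hdom
  obtain ⟨T, hT, hpair, hcount⟩ := htree.exists_nonisomorphic_spanning_trees hD (hdom.mono hQA)
    (hX.mono hQA sdiff_subset) (sdiff_disjoint (s := A) (t := X))
  refine ⟨T, hT, hpair, (Nat.pow_le_pow_right two_pos ?_).trans hcount⟩
  have hnew : #(X ∩ A) ≤ #(A \ pathSupport Q) := card_le_card fun x hx ↦
    mem_sdiff.mpr ⟨(mem_inter.mp hx).2, disjoint_left.mp hXQ (mem_inter.mp hx).1⟩
  have hA := card_sdiff_add_card_eq_card hQA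
  have hXA := card_sdiff_add_card_inter X A
  omega

end Assembly

section Numerics

lemma le_of_double_counting {n s p x β δ K l : ℝ} (hn : 0 ≤ n) (hp : 0 ≤ p) (hK : 1 ≤ K)
    (hl : 1 ≤ l) (hlδ : 10 ^ 4 * K ^ 3 * l ≤ δ) (hβ : β * δ ≤ 9 * K * n)
    (hs : (n - β) * (δ / 3) ≤ s * (K * δ))
    (hp' : (s - β) * (δ / 3) ≤ 2 * l * n + p * (K * δ + δ / 3))
    (hx : (p - β) * (δ / 3) ≤ 3 * (K * δ) * x + n) : n ≤ 120 * K ^ 3 * x := by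
  have hδ : 0 < δ := by nlinarith [one_le_pow₀ (n := 3) hK]
  let u := n / (10 ^ 4 * K ^ 3)
  have hu : 10 ^ 4 * K ^ 3 * u = n := mul_div_cancel₀ n (by positivity)
  have : 0 ≤ u := by positivity
  have hln : l * n ≤ u * δ := by
    calc l * n = u * (10 ^ 4 * K ^ 3 * l) := by rw [← hu]; ring
      _ ≤ u * δ := by gcongr
  have hnu : n ≤ u * δ := (le_mul_of_one_le_left hn hl).trans hln
  have hβu : β ≤ 9 * K * u := by
    refine le_of_mul_le_mul_right (hβ.trans ?_) hδ
    calc 9 * K * n ≤ 9 * K * (u * δ) := by gcongr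
      _ = 9 * K * u * δ := by ring
  have hns : n ≤ β + 3 * K * s := by
    refine le_of_mul_le_mul_right ?_ hδ
    linarith
  have hsp : s ≤ β + 6 * u + 4 * K * p := by
    have hKp : 3 * K * p + p ≤ 4 * K * p := by nlinarith
    refine le_of_mul_le_mul_right ?_ hδ
    nlinarith
  have hpx : p ≤ β + 3 * u + 9 * K * x := by
    refine le_of_mul_le_mul_right ?_ hδ
    linarith
  have hK₂ : K ≤ K ^ 2 := le_self_pow₀ hK two_ne_zero
  have hK₃ : K ^ 2 ≤ K ^ 3 := pow_le_pow_right₀ hK (by norm_num)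
  have hnx : n ≤ 198 * K ^ 3 * u + 108 * K ^ 3 * x := by
    calc n ≤ β + 3 * K * (β + 6 * u + 4 * K * (β + 3 * u + 9 * K * x)) := by
          grw [hns, hsp, hpx]
      _ = (1 + 3 * K + 12 * K ^ 2) * β + (18 * K + 36 * K ^ 2) * u + 108 * K ^ 3 * x := by ring
      _ ≤ (1 + 3 * K + 12 * K ^ 2) * (9 * K * u) + (18 * K + 36 * K ^ 2) * u +
          108 * K ^ 3 * x := by gcongr
      _ = (27 * K + 63 * K ^ 2 + 108 * K ^ 3) * u + 108 * K ^ 3 * x := by ring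
      _ ≤ 198 * K ^ 3 * u + 108 * K ^ 3 * x := by gcongr; linarith
  linarith

lemma mul_log_two_le_of_two_pow_le {n D N m t : ℕ} (hn : 0 < n) (hD : 0 < D)
    (hcount : 2 ^ (m - 2 * t) ≤ n * D ^ (6 * t) * N) :
    m * Real.log 2 ≤ 2 * t + Real.log n + 6 * t * Real.log D + Real.log N := by
  have hN : 0 < N := Nat.pos_of_ne_zero fun h ↦ by simp [h] at hcount
  have hcount' : (2 : ℝ) ^ (m - 2 * t) ≤ n * D ^ (6 * t) * N := mod_cast hcount
  have hsub : (m - 2 * t : ℝ) ≤ (m - 2 * t : ℕ) := by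
    rw [sub_le_iff_le_add]
    exact_mod_cast le_tsub_add
  have hlog : (m - 2 * t : ℝ) * Real.log 2 ≤ Real.log n + 6 * t * Real.log D + Real.log N := by
    calc (m - 2 * t : ℝ) * Real.log 2 ≤ (m - 2 * t : ℕ) * Real.log 2 := by gcongr
      _ = Real.log (2 ^ (m - 2 * t)) := (Real.log_pow _ _).symm
      _ ≤ Real.log (n * D ^ (6 * t) * N) := Real.log_le_log (by positivity) hcount'
      _ = Real.log n + 6 * t * Real.log D + Real.log N := by
        rw [Real.log_mul (by positivity) (by positivity),
          Real.log_mul (by positivity) (by positivity), Real.log_pow]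
        push_cast
        ring
  have htlog : t * Real.log 2 ≤ t :=
    mul_le_of_le_one_right (by positivity) (by linarith [Real.log_two_lt_d9])
  linarith

lemma exists_forall_mul_log_le_sqrt {E : ℝ} (hE : 0 < E) :
    ∃ x₀ : ℝ, ∀ x, x₀ ≤ x → E * Real.log x ≤ √x := by
  have hlittle := (isLittleO_log_rpow_atTop (one_half_pos (α := ℝ))).bound (inv_pos.mpr hE)
  obtain ⟨x₀, hx₀⟩ := Filter.eventually_atTop.mp hlittle
  refine ⟨x₀, fun x hx ↦ ?_⟩
  have hnorm := (Real.le_norm_self _).trans (hx₀ x hx)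
  rwa [← Real.sqrt_eq_rpow, Real.norm_of_nonneg (Real.sqrt_nonneg x), le_inv_mul_iff₀ hE] at hnorm

lemma natCeil_sqrt_le_two_mul {δ : ℝ} (hδ : 1 ≤ δ) : (⌈√δ⌉₊ : ℝ) ≤ 2 * √δ := by
  have hsqrt : 1 ≤ √δ := Real.one_le_sqrt.mpr hδ
  linarith [Nat.ceil_lt_add_one (Real.sqrt_nonneg δ)]

lemma mul_sqrt_le_of_le_div {t n l K δ : ℝ} (hK : 1 ≤ K) (hn : 0 ≤ n) (hδ : 1 ≤ δ)
    (hl : √δ ≤ l) (hl' : l ≤ 2 * √δ) (ht : t ≤ n / l + 9 * K * n / δ + 6 * l * n / δ) :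
    t * √δ ≤ 22 * K * n := by
  have hsqrt : 1 ≤ √δ := Real.one_le_sqrt.mpr hδ
  have hsq : √δ * √δ = δ := Real.mul_self_sqrt (by linarith)
  have hKn : n ≤ K * n := le_mul_of_one_le_left hn hK
  have hl₀ : 0 < l := by linarith
  have hcover : n / l * √δ ≤ n := by
    calc n / l * √δ ≤ n / l * l := by gcongr
      _ = n := div_mul_cancel₀ n hl₀.ne'
  have hbad : 9 * K * n / δ * √δ ≤ 9 * K * n := by
    rw [div_mul_eq_mul_div, div_le_iff₀ (by linarith)]
    gcongr
    nlinarith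
  have hpaths : 6 * l * n / δ * √δ ≤ 12 * n := by
    rw [div_mul_eq_mul_div, div_le_iff₀ (by linarith)]
    calc 6 * l * n * √δ ≤ 6 * (2 * √δ) * n * √δ := by gcongr
      _ = 12 * n * δ := by linear_combination 12 * n * hsq
  calc t * √δ ≤ (n / l + 9 * K * n / δ + 6 * l * n / δ) * √δ := by gcongr
    _ ≤ 22 * K * n := by linarith

lemma le_log_of_two_pow_le {n D N m t : ℕ} {K δ : ℝ} (hK : 1 ≤ K) (hn : 0 < n) (hD : 0 < D)
    (hcount : 2 ^ (m - 2 * t) ≤ n * D ^ (6 * t) * N)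
    (hm : n ≤ 120 * K ^ 3 * m) (ht : t * √δ ≤ 22 * K * n) (hDδ : D ≤ K * δ) (hKδ : K ≤ δ)
    (hδ : 10 ^ 6 * K ^ 4 ≤ √δ) (hlogδ : 10 ^ 6 * K ^ 4 * Real.log δ ≤ √δ)
    (hlogn : 10 ^ 6 * K ^ 4 * Real.log n ≤ n) : n / (200 * K ^ 3) ≤ Real.log N := by
  have hδ₀ : 0 < δ := by linarith
  have hlogD : Real.log D ≤ 2 * Real.log δ := by
    calc Real.log D ≤ Real.log (δ * δ) :=
          Real.log_le_log (mod_cast hD) (hDδ.trans (by gcongr))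
      _ = 2 * Real.log δ := by rw [Real.log_mul hδ₀.ne' hδ₀.ne', two_mul]
  have htlog : 10 ^ 6 * K ^ 4 * (t * Real.log δ) ≤ 22 * K * n := by
    calc 10 ^ 6 * K ^ 4 * (t * Real.log δ) = t * (10 ^ 6 * K ^ 4 * Real.log δ) := by ring
      _ ≤ 22 * K * n := by grw [hlogδ, ht]
  have htE : 10 ^ 6 * K ^ 4 * t ≤ 22 * K * n := by
    calc 10 ^ 6 * K ^ 4 * t ≤ √δ * t := by gcongr
      _ ≤ 22 * K * n := by rwa [mul_comm]
  have hlogn' : 10 ^ 6 * K ^ 4 * Real.log n ≤ K * n :=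
    hlogn.trans (le_mul_of_one_le_left (by positivity) hK)
  have hlogN : 0.69 * m ≤ 2 * t + Real.log n + 12 * (t * Real.log δ) + Real.log N := by
    have htD : t * Real.log D ≤ t * (2 * Real.log δ) := by gcongr
    have hmlog : m * 0.69 ≤ m * Real.log 2 := by gcongr; linarith [Real.log_two_gt_d9]
    linarith [mul_log_two_le_of_two_pow_le hn hD hcount]
  have hmn : 0.69 / 120 * 10 ^ 6 * (K * n) ≤ 10 ^ 6 * K ^ 4 * (0.69 * m) := by
    calc 0.69 / 120 * 10 ^ 6 * (K * n) ≤ 0.69 / 120 * 10 ^ 6 * (K * (120 * K ^ 3 * m)) := by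
          gcongr
      _ = 10 ^ 6 * K ^ 4 * (0.69 * m) := by ring
  have hE : 0 < 10 ^ 6 * K ^ 4 := by positivity
  refine le_of_mul_le_mul_left ?_ hE
  calc 10 ^ 6 * K ^ 4 * (n / (200 * K ^ 3)) = 5000 * (K * n) := by field_simp; norm_num
    _ ≤ 10 ^ 6 * K ^ 4 * Real.log N := by
      have hKn : 0 ≤ K * n := by positivity
      linarith [mul_le_mul_of_nonneg_left hlogN hE.le]

end Numerics

section DegreeRatio

variable {V : Type*} [Fintype V] {G : SimpleGraph V} [DecidableRel G.Adj]

lemma card_mul_le_of_card_mul_sq_le {bad : Finset V} {K δ : ℝ} (hδ : 0 < δ)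
    (hdeg : ∀ v, (G.degree v : ℝ) ≤ K * δ)
    (hbad : #bad * δ ^ 2 ≤ 9 * ∑ v, (G.degree v : ℝ)) :
    #bad * δ ≤ 9 * K * Fintype.card V := by
  have hsum : ∑ v, (G.degree v : ℝ) ≤ Fintype.card V * (K * δ) := by
    simpa using sum_le_card_nsmul univ _ _ fun v _ ↦ hdeg v
  exact le_of_mul_le_mul_right (by linarith) hδ

lemma maxDegree_le_of_degree_le [Nonempty V] {Δ : ℝ} (hdeg : ∀ v, (G.degree v : ℝ) ≤ Δ) :
    (G.maxDegree : ℝ) ≤ Δ := by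
  obtain ⟨v, hv⟩ := G.exists_maximal_degree_vertex
  exact hv ▸ hdeg v

lemma maxDegree_pos_of_le_degree [Nonempty V] {δ : ℝ} (hδ : 0 < δ)
    (hdeg : ∀ v, δ ≤ G.degree v) : 0 < G.maxDegree := by
  obtain ⟨v⟩ := ‹Nonempty V›
  have hv : (0 : ℝ) < G.degree v := hδ.trans_le (hdeg v)
  exact (Nat.cast_pos.mp hv).trans_le (G.degree_le_maxDegree v)

lemma exists_pathFamily_cherryFamily [DecidableEq V] {S bad : Finset V} {K δ : ℝ} {l : ℕ}
    (hK : 1 ≤ K) (hl : 0 < l) (hlδ : 10 ^ 4 * K ^ 3 * l ≤ δ) (hmax : G.maxDegree ≤ K * δ)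
    (hbad : #bad * δ ≤ 9 * K * Fintype.card V)
    (hS : ∀ v ∉ bad, δ / 3 ≤ degIn G S v ∧ δ / 3 ≤ degIn G Sᶜ v) :
    ∃ Q X a b, IsPathFamily G Q ∧ (∀ q ∈ Q, q.length = l) ∧ pathSupport Q ⊆ S ∧ X ⊆ Sᶜ ∧
      IsCherryFamily G (pathSupport Q) X a b ∧ Fintype.card V ≤ 120 * K ^ 3 * #X := by
  have hδ : 0 ≤ δ / 3 := by
    have : 0 ≤ 10 ^ 4 * K ^ 3 * l := by positivity
    linarith
  have hSbig := card_univ_sub_card_mul_le hδ fun v hv ↦ (hS v hv).1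
  obtain ⟨Q, hQ, hlen, hQS, hQbig⟩ := exists_pathFamily_subset hδ hl fun v hv ↦ (hS v hv).1
  obtain ⟨X, a, b, hXS, hX, hXbig⟩ :=
    exists_cherryFamily_subset hδ (fun v hv ↦ (hS v hv).2) (pathSupport Q)
  refine ⟨Q, X, a, b, hQ, hlen, hQS, hXS, hX, ?_⟩
  exact le_of_double_counting (Nat.cast_nonneg _) (Nat.cast_nonneg _) hK (mod_cast hl) hlδ hbad
    (by grw [hSbig, hmax]) (by grw [hQbig, hmax]) (by grw [hXbig, hmax])

lemma exists_nonisomorphic_spanning_trees_two_pow_le {K δ : ℝ} {l : ℕ} (hG : G.Connected)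
    (hK : 1 ≤ K) (hl : 0 < l) (hlδ : 10 ^ 4 * K ^ 3 * l ≤ δ)
    (hdeg : ∀ v, δ ≤ G.degree v ∧ G.degree v ≤ K * δ) :
    ∃ (T : Finset (SimpleGraph V)) (m t : ℕ), (∀ H ∈ T, H ≤ G ∧ H.IsTree) ∧
      (T : Set (SimpleGraph V)).Pairwise (fun H H' ↦ IsEmpty (H ≃g H')) ∧
      2 ^ (m - 2 * t) ≤ Fintype.card V * G.maxDegree ^ (6 * t) * #T ∧
      Fintype.card V ≤ 120 * K ^ 3 * m ∧
      t ≤ Fintype.card V / l + 9 * K * Fintype.card V / δ + 6 * l * Fintype.card V / δ := by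
  classical
  have := hG.nonempty
  have hδ : 0 < δ := lt_of_lt_of_le (by positivity) hlδ
  have hmax : G.maxDegree ≤ K * δ := maxDegree_le_of_degree_le fun v ↦ (hdeg v).2
  have hmax₀ : 0 < G.maxDegree := maxDegree_pos_of_le_degree hδ fun v ↦ (hdeg v).1
  obtain ⟨S, bad, hbad, hS⟩ := exists_set_third_le_degIn G hδ.le fun v ↦ (hdeg v).1
  replace hbad := card_mul_le_of_card_mul_sq_le hδ (fun v ↦ (hdeg v).2) hbad
  obtain ⟨Q, X, a, b, hQ, hlen, hQS, hXS, hX, hXbig⟩ :=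
    exists_pathFamily_cherryFamily hK hl hlδ hmax hbad hS
  have hXdisj : Disjoint X S := disjoint_compl_left.mono_left hXS
  obtain ⟨Q', hQ', hQQ', hXQ', hdom, hcard⟩ := hQ.exists_dominating_extension hlen hl
    (by positivity : 0 < δ / 3) (fun v hv ↦ (hS v hv).1) hXdisj (hXdisj.mono_right hQS)
    fun x hx ↦ ⟨a x, hX.left_mem x hx, hX.adj_left x hx⟩
  obtain ⟨T, hT, hnoniso, hcount⟩ := hQ'.exists_nonisomorphic_spanning_trees hG hmax₀ hdom
    (hX.mono hQQ' subset_rfl) hXQ'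
  refine ⟨T, #X, Q'.length, hT, hnoniso, hcount, hXbig, hcard.trans ?_⟩
  have hbad' : (#bad : ℝ) ≤ 9 * K * Fintype.card V / δ := (le_div_iff₀ hδ).mpr hbad
  have hthree : 2 * l * Fintype.card V / (δ / 3) = 6 * l * Fintype.card V / δ := by
    field_simp; norm_num
  linarith

/- The path length `l = ⌈√δ⌉` balances the `n / l` long paths against the `6 l n / δ` vertices
added to make the family dominating, so that only `O(n / √δ)` paths occur in total. -/
lemma exists_nonisomorphic_spanning_trees_of_log_le {K δ : ℝ} (hK : 1 ≤ K) (hG : G.Connected)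
    (hdeg : ∀ v, δ ≤ G.degree v ∧ G.degree v ≤ K * δ) (hδ : 10 ^ 6 * K ^ 4 ≤ √δ)
    (hlogδ : 10 ^ 6 * K ^ 4 * Real.log δ ≤ √δ)
    (hlogn : 10 ^ 6 * K ^ 4 * Real.log (Fintype.card V) ≤ Fintype.card V) :
    ∃ T : Finset (SimpleGraph V), (∀ H ∈ T, H ≤ G ∧ H.IsTree) ∧
      (T : Set (SimpleGraph V)).Pairwise (fun H H' ↦ IsEmpty (H ≃g H')) ∧
      Real.exp (Fintype.card V / (200 * K ^ 3)) ≤ #T := by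
  have := hG.nonempty
  have hKδ : K ≤ √δ := by linarith [le_self_pow₀ hK four_ne_zero]
  have hδ₁ : 1 ≤ δ := Real.one_le_sqrt.mp (hK.trans hKδ)
  have hl : 0 < ⌈√δ⌉₊ := Nat.ceil_pos.mpr (by linarith)
  have hl₂ : (⌈√δ⌉₊ : ℝ) ≤ 2 * √δ := natCeil_sqrt_le_two_mul hδ₁
  have hlδ : 10 ^ 4 * K ^ 3 * ⌈√δ⌉₊ ≤ δ := by
    calc 10 ^ 4 * K ^ 3 * ⌈√δ⌉₊ ≤ 10 ^ 4 * K ^ 3 * (2 * √δ) := by gcongr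
      _ = 2 * 10 ^ 4 * K ^ 3 * √δ := by ring
      _ ≤ 10 ^ 6 * K ^ 4 * √δ := by gcongr <;> norm_num
      _ ≤ √δ * √δ := by gcongr
      _ = δ := Real.mul_self_sqrt (by linarith)
  obtain ⟨T, m, t, hT, hnoniso, hcount, hm, ht⟩ :=
    exists_nonisomorphic_spanning_trees_two_pow_le hG hK hl hlδ hdeg
  refine ⟨T, hT, hnoniso, ?_⟩
  have hmax₀ : 0 < G.maxDegree := maxDegree_pos_of_le_degree (by linarith) fun v ↦ (hdeg v).1
  have hlog : Fintype.card V / (200 * K ^ 3) ≤ Real.log #T :=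
    le_log_of_two_pow_le hK Fintype.card_pos hmax₀ hcount hm
      (mul_sqrt_le_of_le_div hK (Nat.cast_nonneg _) hδ₁ (Nat.le_ceil _) hl₂ ht)
      (maxDegree_le_of_degree_le fun v ↦ (hdeg v).2)
      (hKδ.trans (Real.sqrt_le_self_iff.mpr (.inr hδ₁))) hδ hlogδ hlogn
  have hT₀ : 0 < #T := Nat.pos_of_ne_zero fun h ↦ by simp [h] at hcount
  rwa [Real.le_log_iff_exp_le (mod_cast hT₀)] at hlog

end DegreeRatio

theorem many_non_isomorphic_spanning_trees_general.{u} (K : ℝ) (hK : 1 ≤ K) :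
    ∃ d₀ : ℝ, 0 < d₀ ∧ ∀ δ : ℝ, d₀ ≤ δ →
      ∀ (V : Type u) [Fintype V] (G : SimpleGraph V) [DecidableRel G.Adj], G.Connected →
        (∀ v, δ ≤ G.degree v ∧ G.degree v ≤ K * δ) →
        ∃ S : Finset (SimpleGraph V), (∀ H ∈ S, H ≤ G ∧ H.IsTree) ∧
          (S : Set (SimpleGraph V)).Pairwise (fun H H' ↦ IsEmpty (H ≃g H')) ∧
          Real.exp (Fintype.card V / (200 * K ^ 3)) ≤ #S := by
  have hE : 0 < 10 ^ 6 * K ^ 4 := by positivity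
  obtain ⟨x₀, hx₀⟩ := exists_forall_mul_log_le_sqrt hE
  refine ⟨max x₀ ((10 ^ 6 * K ^ 4) ^ 2), lt_max_of_lt_right (by positivity),
    fun δ hδ V _ G _ hG hdeg ↦ ?_⟩
  obtain ⟨hx₀δ, hEδ⟩ := max_le_iff.mp hδ
  obtain ⟨v⟩ := hG.nonempty
  have hδn : δ ≤ Fintype.card V := (hdeg v).1.trans (mod_cast (G.degree_lt_card_verts v).le)
  have hn : (1 : ℝ) ≤ Fintype.card V := mod_cast Fintype.card_pos_iff.mpr ⟨v⟩
  exact exists_nonisomorphic_spanning_trees_of_log_le hK hG hdeg (Real.le_sqrt_of_sq_le hEδ)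
    (hx₀ δ hx₀δ) ((hx₀ _ (hx₀δ.trans hδn)).trans (Real.sqrt_le_self_iff.mpr (.inr hn)))

/-- Theorem 1.5: every connected `n`-vertex almost `d`-regular graph contains
at least `e^{n/2000}` pairwise non-isomorphic spanning trees. -/
theorem many_non_isomorphic_spanning_trees :
    ∃ d₀ : ℝ, 0 < d₀ ∧ ∀ d : ℕ, d₀ ≤ d →
      ∀ (V : Type) [Fintype V] [DecidableEq V]
        (n : ℕ) (_ : Fintype.card V = n)
        (G : SimpleGraph V) [DecidableRel G.Adj] (_ : G.Connected)
        (_ : ∀ v, (1 - (10:ℝ) ^ (-10 : ℤ)) * d ≤ (G.degree v : ℝ) ∧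
              (G.degree v : ℝ) ≤ (1 + (10:ℝ) ^ (-10 : ℤ)) * d),
        ∃ S : Finset (SimpleGraph V),
          (∀ H ∈ S, H ≤ G ∧ H.IsTree) ∧
          (∀ H ∈ S, ∀ H' ∈ S, H ≠ H' → IsEmpty (H ≃g H')) ∧
          Real.exp ((n : ℝ) / 2000) ≤ (S.card : ℝ) := by
  obtain ⟨d₀, hd₀, h⟩ := many_non_isomorphic_spanning_trees_general 2 one_le_two
  refine ⟨2 * d₀, by positivity, fun d hd V _ _ n hn G _ hG hdeg ↦ ?_⟩
  obtain ⟨S, hS, hnoniso, hcard⟩ := h ((1 - (10 : ℝ) ^ (-10 : ℤ)) * d) (by norm_num; linarith) V G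
    hG fun v ↦ ⟨(hdeg v).1, (hdeg v).2.trans (by norm_num; linarith)⟩
  refine ⟨S, hS, hnoniso, le_trans ?_ hcard⟩
  rw [hn]
  gcongr
  norm_num
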